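/- arXiv:2504.05300 — 2 statements merged into one kernel-verified Lean document; each statement's English description precedes it below -/
import Mathlib

section
/- For every t ∈ [T], define δ_{t−1}(x) := ∫_{E_t^c} (4π² α_t² (1−α_t))^{−d/2} exp( −‖√α_t x − u‖₂² / (2 α_t (1−α_t)) ) · ∑_{k=1}^K π_k exp( −‖u − √ᾱ_t μ_k‖₂² / (2 α_t²) ) du. Then ∫_{ℝ^d} δ_{t−1}(x) dx ≤ C ( T^{−3} + (1−α_t)² log²(KT) ) for some absolute constant C > 0. -/
open MeasureTheory Real Finset
open scoped RealInnerProductSpace BigOperators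

noncomputable section

/-- Density of the Gaussian distribution `N(m, v I_d)` on `ℝ^d`. -/
def gaussV (d : ℕ) (v : ℝ) (m x : EuclideanSpace ℝ (Fin d)) : ℝ :=
  (2 * Real.pi * v) ^ (-(d : ℝ) / 2) * Real.exp (-‖x - m‖ ^ 2 / (2 * v))

/-- Density of the Gaussian mixture `∑_k w_k N(√abar μ_k, I_d)`. -/
def mixDensity (d K : ℕ) (w : Fin K → ℝ) (μ : Fin K → EuclideanSpace ℝ (Fin d))
    (abar : ℝ) (x : EuclideanSpace ℝ (Fin d)) : ℝ :=
  ∑ k, w k * gaussV d 1 (Real.sqrt abar • μ k) x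

/-- Posterior component weights `π_k^{(t)}(x)`. -/
def postWeight (d K : ℕ) (w : Fin K → ℝ) (μ : Fin K → EuclideanSpace ℝ (Fin d))
    (abar : ℝ) (k : Fin K) (x : EuclideanSpace ℝ (Fin d)) : ℝ :=
  w k * Real.exp (-‖x - Real.sqrt abar • μ k‖ ^ 2 / 2) /
    ∑ i, w i * Real.exp (-‖x - Real.sqrt abar • μ i‖ ^ 2 / 2)

/-- Closed form of the score `∇ log p_{X_t^GMM}` of the diffused GMM. -/
def gmmScore (d K : ℕ) (w : Fin K → ℝ) (μ : Fin K → EuclideanSpace ℝ (Fin d))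
    (abar : ℝ) (x : EuclideanSpace ℝ (Fin d)) : EuclideanSpace ℝ (Fin d) :=
  -x + Real.sqrt abar • ∑ k, postWeight d K w μ abar k x • μ k

/-- The Jacobian matrix `J_t(x)` of the diffused GMM score. -/
def gmmJac (d K : ℕ) (w : Fin K → ℝ) (μ : Fin K → EuclideanSpace ℝ (Fin d))
    (abar : ℝ) (x : EuclideanSpace ℝ (Fin d)) : Matrix (Fin d) (Fin d) ℝ :=
  Matrix.of fun i j =>
    (if i = j then (-1 : ℝ) else 0) +
      abar * ((∑ k, postWeight d K w μ abar k x * (μ k i * μ k j)) -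
        (∑ k, postWeight d K w μ abar k x * μ k i) *
          (∑ k, postWeight d K w μ abar k x * μ k j))

/-- The quantity `ζ_k^{(t)}(x)`, where `abar` plays the role of `ᾱ_t` and `a` that of `α_t`. -/
def zeta (d K : ℕ) (w : Fin K → ℝ) (μ : Fin K → EuclideanSpace ℝ (Fin d))
    (abar a : ℝ) (k : Fin K) (x : EuclideanSpace ℝ (Fin d)) : ℝ :=
  (1 - a ^ 2) / (2 * a ^ 2) *
      (‖x - Real.sqrt abar • μ k‖ ^ 2 -
        ∑ i, postWeight d K w μ abar i x * ‖x - Real.sqrt abar • μ i‖ ^ 2) +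
    (1 - a) / a ^ 2 *
      ⟪gmmScore d K w μ abar x,
        ∑ i, postWeight d K w μ abar i x • (Real.sqrt abar • (μ i - μ k))⟫

/-- The typical set `E_t`. -/
def Eset (d K T : ℕ) (w : Fin K → ℝ) (μ : Fin K → EuclideanSpace ℝ (Fin d))
    (abar a C₁ C₂ : ℝ) : Set (EuclideanSpace ℝ (Fin d)) :=
  {x | Matrix.trace (1 + gmmJac d K w μ abar x) ≤ C₁ * Real.log ((K : ℝ) * T) ∧
    ∑ k, postWeight d K w μ abar k x * Real.exp (-(zeta d K w μ abar a k x)) ≤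
      Real.exp (C₂ * (1 - a) ^ 2 * Real.log ((K : ℝ) * T) ^ 2)}

/-- The set `A_t`. -/
def Aset (d K T : ℕ) (w : Fin K → ℝ) (μ : Fin K → EuclideanSpace ℝ (Fin d))
    (abar cR C₇ : ℝ) : Set (EuclideanSpace ℝ (Fin d)) :=
  {x | -(C₇ * d * Real.log ((d : ℝ) * T)) ≤ Real.log (mixDensity d K w μ abar x) ∧
    ‖x‖ ≤ Real.sqrt (2 * (T : ℝ) ^ (2 * cR) + 16 * d * Real.log T)}

/-- The set `T_k`. -/
def Tset (d K T : ℕ) (μ : Fin K → EuclideanSpace ℝ (Fin d))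
    (abar C₅ : ℝ) (k : Fin K) : Set (EuclideanSpace ℝ (Fin d)) :=
  {x | ∀ i : Fin K,
    |⟪x - Real.sqrt abar • μ k, Real.sqrt abar • (μ i - μ k)⟫| ≤
      C₅ * Real.sqrt (abar * Real.log ((K : ℝ) * T)) * ‖μ i - μ k‖}

/-- Forward (diffused) marginal density at noise level `abar`, starting from density `f₀`. -/
def fwdDensity (d : ℕ) (f₀ : EuclideanSpace ℝ (Fin d) → ℝ) (abar : ℝ)
    (x : EuclideanSpace ℝ (Fin d)) : ℝ :=
  ∫ y, gaussV d (1 - abar) (Real.sqrt abar • y) x * f₀ y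

/-- Stein score of a density `p`. -/
def scoreOf (d : ℕ) (p : EuclideanSpace ℝ (Fin d) → ℝ)
    (x : EuclideanSpace ℝ (Fin d)) : EuclideanSpace ℝ (Fin d) :=
  gradient (fun y => Real.log (p y)) x

/-- Truncation (clipping) of a score estimate at radius `R`. -/
def clipFn (d : ℕ) (R : ℝ) (s : EuclideanSpace ℝ (Fin d) → EuclideanSpace ℝ (Fin d))
    (x : EuclideanSpace ℝ (Fin d)) : EuclideanSpace ℝ (Fin d) :=
  if ‖s x‖ ≤ R then s x else 0

/-- Total-variation distance between two densities on `ℝ^d`. -/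
def tvDist (d : ℕ) (p q : EuclideanSpace ℝ (Fin d) → ℝ) : ℝ :=
  (1 / 2) * ∫ x, |p x - q x|

/-- Density of the one-step (DDPM-type) reverse Gaussian transition with rate `a`
and drift field `s`, from `y` to `x`. -/
def ddpmKernel (d : ℕ) (a : ℝ) (s : EuclideanSpace ℝ (Fin d) → EuclideanSpace ℝ (Fin d))
    (y x : EuclideanSpace ℝ (Fin d)) : ℝ :=
  gaussV d (1 - a) ((Real.sqrt a)⁻¹ • (y + (1 - a) • s y)) x

/-- Density of `Y_{T-n}` for the DDPM sampler run with rates `α` and score estimates `s`. -/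
def ddpmDensity (d T : ℕ) (α : ℕ → ℝ)
    (s : ℕ → EuclideanSpace ℝ (Fin d) → EuclideanSpace ℝ (Fin d)) :
    ℕ → EuclideanSpace ℝ (Fin d) → ℝ
  | 0 => gaussV d 1 0
  | n + 1 => fun x =>
      ∫ y, ddpmKernel d (α (T - n)) (s (T - n)) y x * ddpmDensity d T α s n y

/-- Density (on `ℝ^d`) of `Ȳ_{T-n}^-` for the auxiliary reverse process. -/
def pbarMinus (d K T : ℕ) (w : Fin K → ℝ) (μ : Fin K → EuclideanSpace ℝ (Fin d))
    (αbar α : ℕ → ℝ) (C₁ C₂ : ℝ) : ℕ → EuclideanSpace ℝ (Fin d) → ℝ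
  | 0 => (Eset d K T w μ (αbar T) (α T) C₁ C₂).indicator (gaussV d 1 0)
  | n + 1 =>
      (Eset d K T w μ (αbar (T - n)) (α (T - n)) C₁ C₂).indicator fun x =>
        ∫ y in Eset d K T w μ (αbar (T - n)) (α (T - n)) C₁ C₂,
          ddpmKernel d (α (T - n)) (gmmScore d K w μ (αbar (T - n))) y x *
            min (mixDensity d K w μ (αbar (T - n)) y)
              (pbarMinus d K T w μ αbar α C₁ C₂ n y)

/-- The function `Δ_t(x) = p_{X_t^GMM}(x) - p_{Ȳ_t}(x)`. -/
def DeltaFn (d K T : ℕ) (w : Fin K → ℝ) (μ : Fin K → EuclideanSpace ℝ (Fin d))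
    (αbar α : ℕ → ℝ) (C₁ C₂ : ℝ) (t : ℕ) (x : EuclideanSpace ℝ (Fin d)) : ℝ :=
  mixDensity d K w μ (αbar t) x -
    min (mixDensity d K w μ (αbar t) x) (pbarMinus d K T w μ αbar α C₁ C₂ (T - t) x)

end

section helpers
variable {d : ℕ}

lemma aux_gauss_lint (v : ℝ) (hv : 0 < v) (m : EuclideanSpace ℝ (Fin d)) :
    ∫⁻ u, ENNReal.ofReal (Real.exp (-‖u - m‖ ^ 2 / (2 * v))) =
      ENNReal.ofReal ((2 * Real.pi * v) ^ ((d : ℝ) / 2)) := by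
  have h0 : ∀ x : EuclideanSpace ℝ (Fin d), -(1 / (2 * v)) * ‖x‖ ^ 2 = -‖x‖ ^ 2 / (2 * v) := by
    intro x; ring
  have hb : 0 < 1 / (2 * v) := by positivity
  have h1 := GaussianFourier.integral_rexp_neg_mul_sq_norm (V := EuclideanSpace ℝ (Fin d)) hb
  have h2 : Real.pi / (1 / (2 * v)) = 2 * Real.pi * v := by field_simp
  rw [h2] at h1
  simp only [h0, finrank_euclideanSpace, Fintype.card_fin] at h1
  have hIntgr : Integrable (fun x : EuclideanSpace ℝ (Fin d) => Real.exp (-‖x‖ ^ 2 / (2 * v))) := by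
    by_contra hn
    rw [integral_undef hn] at h1
    have : 0 < (2 * Real.pi * v) ^ ((d : ℝ) / 2) := by positivity
    linarith
  rw [lintegral_sub_right_eq_self (fun u : EuclideanSpace ℝ (Fin d) =>
    ENNReal.ofReal (Real.exp (-‖u‖ ^ 2 / (2 * v)))) m, ← h1,
    ofReal_integral_eq_lintegral_ofReal hIntgr (ae_of_all _ fun _ => (Real.exp_pos _).le)]

/-- Gaussian normalisation -/
lemma aux_gauss_one (a : ℝ) (ha : 0 < a) (m : EuclideanSpace ℝ (Fin d)) :
    ∫⁻ u, ENNReal.ofReal ((2 * Real.pi * a ^ 2) ^ (-(d : ℝ) / 2) *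
      Real.exp (-‖u - m‖ ^ 2 / (2 * a ^ 2))) = 1 := by
  have hp : 0 < 2 * Real.pi * a ^ 2 := by positivity
  simp_rw [ENNReal.ofReal_mul (Real.rpow_nonneg hp.le (-(d : ℝ) / 2))]
  rw [lintegral_const_mul' _ _ ENNReal.ofReal_ne_top, aux_gauss_lint _ (by positivity),
    ← ENNReal.ofReal_mul (by positivity), ← Real.rpow_add hp]
  simp [neg_div]

lemma aux_gauss_exp (a : ℝ) (ha : 0 < a) (m c : EuclideanSpace ℝ (Fin d)) (s : ℝ) :
    ∫⁻ u, ENNReal.ofReal ((2 * Real.pi * a ^ 2) ^ (-(d : ℝ) / 2) *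
      Real.exp (-‖u - m‖ ^ 2 / (2 * a ^ 2)) * Real.exp (⟪u - m, c⟫ - s)) =
      ENNReal.ofReal (Real.exp (a ^ 2 * ‖c‖ ^ 2 / 2 - s)) := by
  have h : ∀ u : EuclideanSpace ℝ (Fin d), (2 * Real.pi * a ^ 2) ^ (-(d : ℝ) / 2) *
      Real.exp (-‖u - m‖ ^ 2 / (2 * a ^ 2)) * Real.exp (⟪u - m, c⟫ - s) =
      Real.exp (a ^ 2 * ‖c‖ ^ 2 / 2 - s) * ((2 * Real.pi * a ^ 2) ^ (-(d : ℝ) / 2) *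
      Real.exp (-‖u - (m + a ^ 2 • c)‖ ^ 2 / (2 * a ^ 2))) := by
    intro u
    have e1 : u - (m + a ^ 2 • c) = (u - m) - a ^ 2 • c := by abel
    have e2 : ‖u - (m + a ^ 2 • c)‖ ^ 2 = ‖u - m‖ ^ 2 - 2 * (a ^ 2 * ⟪u - m, c⟫)
        + (a ^ 2) ^ 2 * ‖c‖ ^ 2 := by
      rw [e1, norm_sub_sq_real, real_inner_smul_right, norm_smul, mul_pow]
      simp
    rw [mul_left_comm, ← Real.exp_add, mul_assoc, ← Real.exp_add]
    congr 2
    rw [e2]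
    field_simp
    ring
  simp_rw [h, ENNReal.ofReal_mul (Real.exp_pos _).le]
  rw [lintegral_const_mul' _ _ ENNReal.ofReal_ne_top, aux_gauss_one a ha, mul_one]

/-- reduction of the double integral -/
lemma aux_double (a : ℝ) (ha : 0 < a) (ha1 : a < 1) (S : Set (EuclideanSpace ℝ (Fin d)))
    (ψ : EuclideanSpace ℝ (Fin d) → ℝ) (hψ : Continuous ψ) (hψ0 : ∀ u, 0 ≤ ψ u)
    (B : ℝ) (hB : 0 ≤ B)
    (h : ∫⁻ u in S, ENNReal.ofReal ((2 * Real.pi * a ^ 2) ^ (-(d : ℝ) / 2) * ψ u)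
      ≤ ENNReal.ofReal B) :
    ∫ x, (∫ u in S, (4 * Real.pi ^ 2 * a ^ 2 * (1 - a)) ^ (-(d : ℝ) / 2) *
      Real.exp (-‖Real.sqrt a • x - u‖ ^ 2 / (2 * a * (1 - a))) * ψ u) ≤ B := by
  have h1a : 0 < 1 - a := by linarith
  set c := (4 * Real.pi ^ 2 * a ^ 2 * (1 - a)) ^ (-(d : ℝ) / 2) with hc
  have hc0 : 0 < c := by positivity
  have hcc : c * (2 * Real.pi * (1 - a)) ^ ((d : ℝ) / 2) =
      (2 * Real.pi * a ^ 2) ^ (-(d : ℝ) / 2) := by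
    have : 4 * Real.pi ^ 2 * a ^ 2 * (1 - a) = (2 * Real.pi * a ^ 2) * (2 * Real.pi * (1 - a)) := by
      ring
    rw [hc, this, Real.mul_rpow (by positivity) (by positivity), mul_assoc,
      ← Real.rpow_add (by positivity)]
    simp [neg_div]
  set H : EuclideanSpace ℝ (Fin d) → EuclideanSpace ℝ (Fin d) → ℝ := fun x u =>
    c * Real.exp (-‖Real.sqrt a • x - u‖ ^ 2 / (2 * a * (1 - a))) * ψ u with hH
  have hH0 : ∀ x u, 0 ≤ H x u := fun x u => by
    have := hψ0 u
    simp only [hH]; positivity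
  have key : ENNReal.ofReal (∫ x, ∫ u in S, H x u) ≤ ENNReal.ofReal B := by
    have hn : 0 ≤ ∫ x, ∫ u in S, H x u :=
      integral_nonneg fun x => integral_nonneg fun u => hH0 x u
    rw [← Real.enorm_of_nonneg hn]
    calc ‖∫ x, ∫ u in S, H x u‖ₑ ≤ ∫⁻ x, ‖∫ u in S, H x u‖ₑ := enorm_integral_le_lintegral_enorm _
      _ ≤ ∫⁻ x, ∫⁻ u in S, ‖H x u‖ₑ :=
        lintegral_mono fun x => enorm_integral_le_lintegral_enorm _
      _ = ∫⁻ u in S, ∫⁻ x, ‖H x u‖ₑ := by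
        refine lintegral_lintegral_swap ?_
        refine Measurable.aemeasurable ?_
        refine Continuous.measurable ?_
        simp only [hH, Function.uncurry_def]
        fun_prop
      _ = ∫⁻ u in S, ENNReal.ofReal ((2 * Real.pi * a ^ 2) ^ (-(d : ℝ) / 2) * ψ u) := by
        congr 1
        ext u
        have : ∀ x, ‖H x u‖ₑ = ENNReal.ofReal (c * ψ u) *
            ENNReal.ofReal (Real.exp (-‖x - (Real.sqrt a)⁻¹ • u‖ ^ 2 / (2 * (1 - a)))) := by
          intro x
          rw [Real.enorm_of_nonneg (hH0 x u), ← ENNReal.ofReal_mul (mul_nonneg hc0.le (hψ0 u))]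
          have hs : 0 < Real.sqrt a := Real.sqrt_pos.2 ha
          have e : Real.sqrt a • x - u = Real.sqrt a • (x - (Real.sqrt a)⁻¹ • u) := by
            rw [smul_sub, smul_smul, mul_inv_cancel₀ hs.ne', one_smul]
          simp only [hH]
          rw [e, norm_smul, mul_pow, Real.norm_of_nonneg hs.le, Real.sq_sqrt ha.le]
          have e2 : -(a * ‖x - (Real.sqrt a)⁻¹ • u‖ ^ 2) / (2 * a * (1 - a)) =
            -‖x - (Real.sqrt a)⁻¹ • u‖ ^ 2 / (2 * (1 - a)) := by
            field_simp
          rw [e2]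
          congr 1
          ring
        simp_rw [this]
        rw [lintegral_const_mul' _ _ ENNReal.ofReal_ne_top, aux_gauss_lint _ h1a,
          ← ENNReal.ofReal_mul (mul_nonneg hc0.le (hψ0 u)), ← hcc]
        congr 1
        ring
      _ ≤ _ := h
  exact (ENNReal.ofReal_le_ofReal_iff hB).1 key

end helpers

section helpers
variable {d K : ℕ} {w : Fin K → ℝ} {μ : Fin K → EuclideanSpace ℝ (Fin d)} {abar : ℝ}

lemma aux_den_pos (hw : ∀ k, 0 < w k) (k : Fin K) (x : EuclideanSpace ℝ (Fin d)) :
    0 < ∑ i, w i * Real.exp (-‖x - Real.sqrt abar • μ i‖ ^ 2 / 2) :=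
  Finset.sum_pos (fun i _ => mul_pos (hw i) (Real.exp_pos _)) ⟨k, Finset.mem_univ _⟩

lemma aux_pw_pos (hw : ∀ k, 0 < w k) (k : Fin K) (x : EuclideanSpace ℝ (Fin d)) :
    0 < postWeight d K w μ abar k x :=
  div_pos (mul_pos (hw k) (Real.exp_pos _)) (aux_den_pos hw k x)

lemma aux_pw_sum (hw : ∀ k, 0 < w k) (k : Fin K) (x : EuclideanSpace ℝ (Fin d)) :
    ∑ i, postWeight d K w μ abar i x = 1 := by
  unfold postWeight
  rw [← Finset.sum_div]
  exact div_self (aux_den_pos hw k x).ne'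

lemma aux_pw_ratio (hw : ∀ k, 0 < w k) (i k : Fin K) (x : EuclideanSpace ℝ (Fin d)) :
    postWeight d K w μ abar i x = postWeight d K w μ abar k x *
      (w i / w k * Real.exp (⟪x - Real.sqrt abar • μ k,
        Real.sqrt abar • μ i - Real.sqrt abar • μ k⟫
        - ‖Real.sqrt abar • μ i - Real.sqrt abar • μ k‖ ^ 2 / 2)) := by
  have hD := (aux_den_pos (abar := abar) (μ := μ) hw k x).ne'
  unfold postWeight
  have hk := (hw k).ne'
  have e : -‖x - Real.sqrt abar • μ i‖ ^ 2 / 2 = -‖x - Real.sqrt abar • μ k‖ ^ 2 / 2 +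
      (⟪x - Real.sqrt abar • μ k, Real.sqrt abar • μ i - Real.sqrt abar • μ k⟫
        - ‖Real.sqrt abar • μ i - Real.sqrt abar • μ k‖ ^ 2 / 2) := by
    have : x - Real.sqrt abar • μ i = (x - Real.sqrt abar • μ k) -
      (Real.sqrt abar • μ i - Real.sqrt abar • μ k) := by abel
    rw [this, norm_sub_sq_real]
    ring
  rw [e, Real.exp_add]
  field_simp

lemma aux_pw_cont (hw : ∀ k, 0 < w k) (k : Fin K) :
    Continuous (fun x => postWeight d K w μ abar k x) := by
  unfold postWeight
  refine Continuous.div (by fun_prop) (by fun_prop) (fun x => (aux_den_pos hw k x).ne')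

lemma aux_trace (hab : 0 ≤ abar) (hw : ∀ k, 0 < w k) (k : Fin K) (x c : EuclideanSpace ℝ (Fin d)) :
    Matrix.trace (1 + gmmJac d K w μ abar x) ≤
      ∑ i, postWeight d K w μ abar i x * ‖Real.sqrt abar • μ i - c‖ ^ 2 := by
  set p := fun i => postWeight d K w μ abar i x with hp
  have hsum : ∑ i, p i = 1 := aux_pw_sum hw k x
  have e1 : Matrix.trace (1 + gmmJac d K w μ abar x) =
      ∑ j, abar * ((∑ i, p i * (μ i j * μ i j)) - (∑ i, p i * μ i j) * (∑ i, p i * μ i j)) := by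
    rw [Matrix.trace_add, Matrix.trace_one]
    simp only [Matrix.trace, Matrix.diag, gmmJac, Matrix.of_apply, if_true]
    rw [Finset.sum_add_distrib]
    simp [hp]
  have e2 : ∑ i, p i * ‖Real.sqrt abar • μ i - c‖ ^ 2 =
      ∑ j, ∑ i, p i * (Real.sqrt abar * μ i j - c j) ^ 2 := by
    rw [Finset.sum_comm]
    refine Finset.sum_congr rfl fun i _ => ?_
    rw [EuclideanSpace.norm_sq_eq, Finset.mul_sum]
    refine Finset.sum_congr rfl fun j _ => ?_
    simp
  change _ ≤ ∑ i, p i * ‖Real.sqrt abar • μ i - c‖ ^ 2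
  rw [e1, e2]
  refine Finset.sum_le_sum fun j _ => ?_
  set A := ∑ i, p i * μ i j
  have e3 : ∑ i, p i * (Real.sqrt abar * μ i j - c j) ^ 2 =
      abar * (∑ i, p i * (μ i j * μ i j)) - 2 * c j * Real.sqrt abar * A + c j ^ 2 := by
    have : ∀ i, p i * (Real.sqrt abar * μ i j - c j) ^ 2 = abar * (p i * (μ i j * μ i j))
        - 2 * c j * Real.sqrt abar * (p i * μ i j) + c j ^ 2 * p i := by
      intro i
      have := Real.sq_sqrt hab
      linear_combination (p i * μ i j ^ 2) * this
    simp_rw [this]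
    rw [Finset.sum_add_distrib, Finset.sum_sub_distrib, ← Finset.mul_sum, ← Finset.mul_sum,
      ← Finset.mul_sum, hsum, mul_one]
  rw [e3]
  nlinarith [sq_nonneg (Real.sqrt abar * A - c j), Real.sq_sqrt hab]

lemma aux_trace' (hab : abar ≤ 0) (hw : ∀ k, 0 < w k) (k : Fin K) (x : EuclideanSpace ℝ (Fin d)) :
    Matrix.trace (1 + gmmJac d K w μ abar x) ≤ 0 := by
  set p := fun i => postWeight d K w μ abar i x with hp
  have hsum : ∑ i, p i = 1 := aux_pw_sum hw k x
  have e1 : Matrix.trace (1 + gmmJac d K w μ abar x) =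
      ∑ j, abar * ((∑ i, p i * (μ i j * μ i j)) - (∑ i, p i * μ i j) * (∑ i, p i * μ i j)) := by
    rw [Matrix.trace_add, Matrix.trace_one]
    simp only [Matrix.trace, Matrix.diag, gmmJac, Matrix.of_apply, if_true]
    rw [Finset.sum_add_distrib]
    simp [hp]
  rw [e1]
  refine Finset.sum_nonpos fun j _ => ?_
  refine mul_nonpos_of_nonpos_of_nonneg hab ?_
  set A := ∑ i, p i * μ i j
  have e3 : ∑ i, p i * (μ i j - A) ^ 2 = (∑ i, p i * (μ i j * μ i j)) - A * A := by
    have : ∀ i, p i * (μ i j - A) ^ 2 = p i * (μ i j * μ i j)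
        - 2 * A * (p i * μ i j) + A ^ 2 * p i := by
      intro i; ring
    simp_rw [this]
    rw [Finset.sum_add_distrib, Finset.sum_sub_distrib, ← Finset.mul_sum,
      ← Finset.mul_sum, hsum]
    change _ - 2 * A * A + _ = _
    ring
  rw [← e3]
  exact Finset.sum_nonneg fun i _ => mul_nonneg (aux_pw_pos hw i x).le (sq_nonneg _)

/-- centred form of `-ζ` -/
lemma aux_zeta (hw : ∀ k, 0 < w k) (k : Fin K) (a : ℝ) (ha : a ≠ 0)
    (x c : EuclideanSpace ℝ (Fin d)) (p : Fin K → ℝ)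
    (hp : p = fun i => postWeight d K w μ abar i x)
    (e : Fin K → EuclideanSpace ℝ (Fin d)) (he : e = fun i => Real.sqrt abar • μ i - c) :
    -zeta d K w μ abar a k x = (1 - a) / a ^ 2 *
      (a * (⟪x - c, e k⟫ - ⟪x - c, ∑ i, p i • e i⟫)
        - (1 + a) / 2 * (‖e k‖ ^ 2 - ∑ i, p i * ‖e i‖ ^ 2)
        - ‖∑ i, p i • e i‖ ^ 2 + ⟪∑ i, p i • e i, e k⟫) := by
  have hsum : ∑ i, p i = 1 := by rw [hp]; exact aux_pw_sum hw k x
  set eb := ∑ i, p i • e i with heb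
  have h1 : ∀ i, ‖x - Real.sqrt abar • μ i‖ ^ 2 = ‖x - c‖ ^ 2 - 2 * ⟪x - c, e i⟫ + ‖e i‖ ^ 2 := by
    intro i
    have : x - Real.sqrt abar • μ i = (x - c) - e i := by simp only [he]; abel
    rw [this, norm_sub_sq_real]
  have h2 : ∑ i, p i * ‖x - Real.sqrt abar • μ i‖ ^ 2 =
      ‖x - c‖ ^ 2 - 2 * ⟪x - c, eb⟫ + ∑ i, p i * ‖e i‖ ^ 2 := by
    simp_rw [h1]
    have : ∀ i, p i * (‖x - c‖ ^ 2 - 2 * ⟪x - c, e i⟫ + ‖e i‖ ^ 2) =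
      ‖x - c‖ ^ 2 * p i - 2 * (p i * ⟪x - c, e i⟫) + p i * ‖e i‖ ^ 2 := by intro i; ring
    simp_rw [this]
    rw [Finset.sum_add_distrib, Finset.sum_sub_distrib, ← Finset.mul_sum, ← Finset.mul_sum, hsum,
      heb, inner_sum]
    simp_rw [real_inner_smul_right]
    ring
  have h3 : Real.sqrt abar • ∑ i, p i • μ i = eb + c := by
    have : c = ∑ i, p i • c := by rw [← Finset.sum_smul, hsum, one_smul]
    rw [this, heb, ← Finset.sum_add_distrib, Finset.smul_sum]
    refine Finset.sum_congr rfl fun i _ => ?_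
    rw [← smul_add, he, smul_comm]
    simp
  have h4 : gmmScore d K w μ abar x = -(x - c) + eb := by
    unfold gmmScore
    have : ∑ k, postWeight d K w μ abar k x • μ k = ∑ i, p i • μ i := by rw [hp]
    rw [this, h3]; abel
  have h5 : ∑ i, p i • (Real.sqrt abar • (μ i - μ k)) = eb - e k := by
    have : e k = ∑ i, p i • e k := by rw [← Finset.sum_smul, hsum, one_smul]
    rw [this, heb, ← Finset.sum_sub_distrib]
    refine Finset.sum_congr rfl fun i _ => ?_
    rw [← smul_sub, he, smul_sub]
    simp
  unfold zeta
  have h2' : ∑ i, postWeight d K w μ abar i x * ‖x - Real.sqrt abar • μ i‖ ^ 2 =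
      ‖x - c‖ ^ 2 - 2 * ⟪x - c, eb⟫ + ∑ i, p i * ‖e i‖ ^ 2 := by rw [← h2, hp]
  have h5' : ∑ i, postWeight d K w μ abar i x • (Real.sqrt abar • (μ i - μ k)) = eb - e k := by
    rw [← h5, hp]
  rw [h2', h5', h4, h1 k]
  simp only [inner_add_left, inner_neg_left, inner_sub_right, real_inner_self_eq_norm_sq]
  field_simp
  ring

lemma aux_zeta_cont (hw : ∀ k, 0 < w k) (k : Fin K) (a : ℝ) :
    Continuous (fun x => zeta d K w μ abar a k x) := by
  have h : ∀ i, Continuous (fun x => postWeight d K w μ abar i x) := fun i => aux_pw_cont hw i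
  unfold zeta gmmScore
  fun_prop

lemma aux_Eset_closed (hw : ∀ k, 0 < w k) (T : ℕ) (a C₁ C₂ : ℝ) :
    IsClosed (Eset d K T w μ abar a C₁ C₂) := by
  have h : ∀ i, Continuous (fun x => postWeight d K w μ abar i x) := fun i => aux_pw_cont hw i
  have h2 : ∀ i, Continuous (fun x => zeta d K w μ abar a i x) := fun i => aux_zeta_cont hw i a
  unfold Eset
  rw [Set.ofPred_and]
  refine IsClosed.inter (isClosed_le ?_ continuous_const) (isClosed_le ?_ continuous_const)
  · unfold Matrix.trace gmmJac
    simp only [Matrix.diag, Matrix.add_apply, Matrix.of_apply]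
    fun_prop
  · fun_prop

end helpers

section helpers

lemma aux_exp_quad (x : ℝ) (hx : x ≤ 1) : Real.exp x ≤ 1 + x + x ^ 2 := by
  rcases le_or_gt (-1) x with h | h
  · have := Real.abs_exp_sub_one_sub_id_le (abs_le.2 ⟨h, hx⟩)
    have := (abs_le.1 this).2
    linarith
  · have : Real.exp x ≤ 1 := Real.exp_le_one_iff.2 (by linarith)
    nlinarith

lemma aux_pD (p D L : ℝ) (hp : 0 ≤ p) (hL : 0 < L) (h : p ≤ Real.exp (22 * L - 3 / 8 * D ^ 2)) :
    p * D ^ 2 ≤ 200 * L * p + 4 * Real.exp (-L) ∧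
    p * D ^ 4 ≤ 40000 * L ^ 2 * p + 32 * Real.exp (-L) := by
  have hE := Real.exp_pos (-L)
  rcases le_or_gt (D ^ 2) (200 * L) with hD | hD
  · constructor
    · nlinarith
    · have : D ^ 4 ≤ 40000 * L ^ 2 := by nlinarith [sq_nonneg D]
      nlinarith
  · have h1 : p ≤ Real.exp (-L) * Real.exp (-(D ^ 2 / 4)) := by
      rw [← Real.exp_add]
      exact h.trans (Real.exp_le_exp.2 (by linarith))
    set x := D ^ 2 / 4 with hx
    have hx0 : 0 ≤ x := by positivity
    have e1 : D ^ 2 = 4 * x := by rw [hx]; ring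
    have e2 : D ^ 4 = 16 * x ^ 2 := by rw [hx]; ring
    have h2 : x * Real.exp (-x) ≤ 1 := by
      have := Real.add_one_le_exp x
      rw [Real.exp_neg, ← div_eq_mul_inv, div_le_one (Real.exp_pos _)]
      linarith
    have h3 : x ^ 2 * Real.exp (-x) ≤ 2 := by
      have := Real.quadratic_le_exp_of_nonneg hx0
      rw [Real.exp_neg, ← div_eq_mul_inv, div_le_iff₀ (Real.exp_pos _)]
      linarith
    constructor
    · rw [e1]
      have : p * (4 * x) ≤ Real.exp (-L) * Real.exp (-x) * (4 * x) := by gcongr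
      have h5 : Real.exp (-L) * (x * Real.exp (-x)) ≤ Real.exp (-L) * 1 := by gcongr
      have : 0 ≤ 200 * L * p := by positivity
      nlinarith
    · rw [e2]
      have : p * (16 * x ^ 2) ≤ Real.exp (-L) * Real.exp (-x) * (16 * x ^ 2) := by gcongr
      have h5 : Real.exp (-L) * (x ^ 2 * Real.exp (-x)) ≤ Real.exp (-L) * 2 := by gcongr
      have : 0 ≤ 40000 * L ^ 2 * p := by positivity
      nlinarith

set_option maxHeartbeats 1000000 in
lemma aux_det {V : Type*} [NormedAddCommGroup V] [InnerProductSpace ℝ V] {K : ℕ}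
    (p : Fin K → ℝ) (e : Fin K → V) (z : V) (L a r : ℝ)
    (hp : ∀ i, 0 ≤ p i) (hs : ∑ i, p i = 1) (hL : 1 / 2 ≤ L) (hK : (K : ℝ) * Real.exp (-L) ≤ 1)
    (hpe : ∀ i, p i ≤ Real.exp (22 * L - 3 / 8 * ‖e i‖ ^ 2))
    (hz : ∀ i, |⟪z, e i⟫| ≤ 3 * Real.sqrt L * ‖e i‖)
    (ha0 : 0 ≤ a) (ha1 : a ≤ 1) (hr : 0 ≤ r) (hrL : r * (415 * L) ≤ 1) :
    ∑ i, p i * ‖e i‖ ^ 2 ≤ 208 * L ∧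
    ∑ k, p k * Real.exp (r * (a * (⟪z, e k⟫ - ⟪z, ∑ i, p i • e i⟫)
        - (1 + a) / 2 * (‖e k‖ ^ 2 - ∑ i, p i * ‖e i‖ ^ 2)
        - ‖∑ i, p i • e i‖ ^ 2 + ⟪∑ i, p i • e i, e k⟫)) ≤ 1 + r ^ 2 * (1000000 * L ^ 2) := by
  have hL0 : 0 < L := by linarith
  have hA : ∑ i, p i * ‖e i‖ ^ 2 ≤ 208 * L := by
    calc ∑ i, p i * ‖e i‖ ^ 2 ≤ ∑ i, (200 * L * p i + 4 * Real.exp (-L)) :=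
          Finset.sum_le_sum fun i _ => (aux_pD _ _ L (hp i) hL0 (hpe i)).1
      _ = 200 * L + 4 * (K * Real.exp (-L)) := by
          rw [Finset.sum_add_distrib, ← Finset.mul_sum, hs]; simp; ring
      _ ≤ _ := by linarith
  refine ⟨hA, ?_⟩
  have hA4 : ∑ i, p i * ‖e i‖ ^ 4 ≤ 40128 * L ^ 2 := by
    calc ∑ i, p i * ‖e i‖ ^ 4 ≤ ∑ i, (40000 * L ^ 2 * p i + 32 * Real.exp (-L)) :=
          Finset.sum_le_sum fun i _ => (aux_pD _ _ L (hp i) hL0 (hpe i)).2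
      _ = 40000 * L ^ 2 + 32 * (K * Real.exp (-L)) := by
          rw [Finset.sum_add_distrib, ← Finset.mul_sum, hs]; simp; ring
      _ ≤ _ := by nlinarith
  set s := Real.sqrt L with hsd
  have hs0 : 0 ≤ s := Real.sqrt_nonneg _
  have hs2 : s ^ 2 = L := Real.sq_sqrt hL0.le
  set A := ∑ i, p i * ‖e i‖ ^ 2 with hAd
  have hA0 : 0 ≤ A := Finset.sum_nonneg fun i _ => mul_nonneg (hp i) (sq_nonneg _)
  set eb := ∑ i, p i • e i with heb
  have hm : ∑ i, p i * ‖e i‖ ≤ 15 * s := by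
    set N := ∑ i, p i * ‖e i‖ with hN
    have h0 : 0 ≤ ∑ i, p i * (‖e i‖ - N) ^ 2 :=
      Finset.sum_nonneg fun i _ => mul_nonneg (hp i) (sq_nonneg _)
    have h1 : ∑ i, p i * (‖e i‖ - N) ^ 2 = A - N ^ 2 := by
      have : ∀ i, p i * (‖e i‖ - N) ^ 2 = p i * ‖e i‖ ^ 2 - 2 * N * (p i * ‖e i‖)
        + N ^ 2 * p i := by intro i; ring
      simp_rw [this]
      rw [Finset.sum_add_distrib, Finset.sum_sub_distrib, ← Finset.mul_sum, ← Finset.mul_sum, hs]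
      rw [← hN, ← hAd]; ring
    refine abs_le_of_sq_le_sq' ?_ (by positivity) |>.2
    nlinarith
  have hebn : ‖eb‖ ≤ 15 * s := by
    refine le_trans ?_ hm
    rw [heb]
    refine (norm_sum_le _ _).trans (Finset.sum_le_sum fun i _ => ?_)
    rw [norm_smul, Real.norm_of_nonneg (hp i)]
  have hzeb : |⟪z, eb⟫| ≤ 45 * L := by
    rw [heb, inner_sum]
    refine (Finset.abs_sum_le_sum_abs _ _).trans ?_
    calc ∑ i, |⟪z, p i • e i⟫| ≤ ∑ i, 3 * s * (p i * ‖e i‖) := by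
          refine Finset.sum_le_sum fun i _ => ?_
          rw [real_inner_smul_right, abs_mul, abs_of_nonneg (hp i)]
          have := mul_le_mul_of_nonneg_left (hz i) (hp i)
          linarith
      _ = 3 * s * ∑ i, p i * ‖e i‖ := by rw [Finset.mul_sum]
      _ ≤ 3 * s * (15 * s) := by gcongr
      _ = _ := by rw [← hs2]; ring
  set ξ : Fin K → ℝ := fun k => a * (⟪z, e k⟫ - ⟪z, eb⟫)
        - (1 + a) / 2 * (‖e k‖ ^ 2 - A) - ‖eb‖ ^ 2 + ⟪eb, e k⟫ with hξ
  have hmean : ∑ k, p k * ξ k = 0 := by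
    have h1 : ∑ k, p k * ⟪z, e k⟫ = ⟪z, eb⟫ := by
      rw [heb, inner_sum]; simp_rw [real_inner_smul_right]
    have h2 : ∑ k, p k * ⟪eb, e k⟫ = ‖eb‖ ^ 2 := by
      rw [← real_inner_self_eq_norm_sq]
      nth_rw 3 [heb]
      rw [inner_sum]; simp_rw [real_inner_smul_right]
    have : ∀ k, p k * ξ k = a * (p k * ⟪z, e k⟫) - (a * ⟪z, eb⟫) * p k
        - (1 + a) / 2 * (p k * ‖e k‖ ^ 2) + ((1 + a) / 2 * A) * p k - ‖eb‖ ^ 2 * p k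
        + p k * ⟪eb, e k⟫ := by intro k; simp only [hξ]; ring
    simp_rw [this]
    simp only [Finset.sum_add_distrib, Finset.sum_sub_distrib, ← Finset.mul_sum, hs, h1, h2]
    rw [← hAd]; ring
  have hbd : ∀ k, ξ k ≤ 415 * L ∧ |ξ k| ≤ 3 / 2 * ‖e k‖ ^ 2 + 640 * L := by
    intro k
    set D := ‖e k‖ with hD
    have hD0 : 0 ≤ D := norm_nonneg _
    have b1 : |a * (⟪z, e k⟫ - ⟪z, eb⟫)| ≤ 3 * s * D + 45 * L := by
      rw [abs_mul, abs_of_nonneg ha0]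
      have h1 : |⟪z, e k⟫ - ⟪z, eb⟫| ≤ 3 * s * D + 45 * L :=
        (abs_sub _ _).trans (add_le_add (hz k) hzeb)
      have h2 := abs_nonneg (⟪z, e k⟫ - ⟪z, eb⟫)
      nlinarith
    have b2 : |⟪eb, e k⟫| ≤ 15 * s * D :=
      (abs_real_inner_le_norm _ _).trans (by gcongr)
    have b3 : ‖eb‖ ^ 2 ≤ 225 * L := by
      rw [← hs2]; nlinarith [norm_nonneg eb]
    have b4 : 18 * s * D ≤ D ^ 2 / 2 + 162 * L := by
      rw [← hs2]; nlinarith [sq_nonneg (D - 18 * s)]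
    obtain ⟨c1, c2⟩ := abs_le.1 b1
    obtain ⟨c3, c4⟩ := abs_le.1 b2
    have d1 : (1 + a) / 2 * D ^ 2 ≤ D ^ 2 := by nlinarith [sq_nonneg D]
    have d2 : D ^ 2 / 2 ≤ (1 + a) / 2 * D ^ 2 := by nlinarith [sq_nonneg D]
    have d3 : (1 + a) / 2 * A ≤ A := by nlinarith
    have d4 : 0 ≤ (1 + a) / 2 * A := by positivity
    have e0 : ξ k = a * (⟪z, e k⟫ - ⟪z, eb⟫)
        - (1 + a) / 2 * D ^ 2 + (1 + a) / 2 * A - ‖eb‖ ^ 2 + ⟪eb, e k⟫ := by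
      simp only [hξ]; rw [← hD]; ring
    have e1 := sq_nonneg ‖eb‖
    rw [e0]
    constructor
    · linarith
    · rw [abs_le]; constructor <;> linarith
  have hfin : ∀ k, p k * Real.exp (r * ξ k) ≤
      p k + r * (p k * ξ k) + r ^ 2 * (9 / 2 * (p k * ‖e k‖ ^ 4) + 819200 * L ^ 2 * p k) := by
    intro k
    obtain ⟨h1, h2⟩ := hbd k
    have h3 : r * ξ k ≤ 1 := (mul_le_mul_of_nonneg_left h1 hr).trans hrL
    have h4 := aux_exp_quad _ h3
    have h5 : ξ k ^ 2 ≤ 9 / 2 * ‖e k‖ ^ 4 + 819200 * L ^ 2 := by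
      have h6 : ξ k ^ 2 ≤ (3 / 2 * ‖e k‖ ^ 2 + 640 * L) ^ 2 := sq_le_sq' (abs_le.1 h2).1 (abs_le.1 h2).2
      have h7 := sq_nonneg (3 / 2 * ‖e k‖ ^ 2 - 640 * L)
      have h8 : (3 / 2 * ‖e k‖ ^ 2 + 640 * L) ^ 2 = 9 / 2 * ‖e k‖ ^ 4 + 819200 * L ^ 2 - (3 / 2 * ‖e k‖ ^ 2 - 640 * L) ^ 2 := by ring
      linarith
    have h6 : Real.exp (r * ξ k) ≤ 1 + r * ξ k + r ^ 2 * (9 / 2 * ‖e k‖ ^ 4 + 819200 * L ^ 2) := by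
      have := mul_le_mul_of_nonneg_left h5 (sq_nonneg r)
      have h9 : (r * ξ k) ^ 2 = r ^ 2 * ξ k ^ 2 := by ring
      linarith
    have := mul_le_mul_of_nonneg_left h6 (hp k)
    linarith
  refine (Finset.sum_le_sum fun k _ => hfin k).trans ?_
  rw [Finset.sum_add_distrib, Finset.sum_add_distrib, ← Finset.mul_sum, ← Finset.mul_sum, hmean, hs,
    Finset.sum_add_distrib, ← Finset.mul_sum, ← Finset.mul_sum, hs]
  have : 9 / 2 * ∑ i, p i * ‖e i‖ ^ 4 + 819200 * L ^ 2 * 1 ≤ 1000000 * L ^ 2 := by linarith [sq_nonneg L]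
  have := mul_le_mul_of_nonneg_left this (sq_nonneg r)
  linarith

end helpers

section helpers
variable {d K : ℕ} {w : Fin K → ℝ} {μ : Fin K → EuclideanSpace ℝ (Fin d)} {abar : ℝ}

lemma aux_mem (T : ℕ) (hK : 2 ≤ K) (hT : 1 ≤ T) (hw : ∀ k, 0 < w k) (hw1 : ∀ k, w k < 1)
    (hab : 0 ≤ abar) (a : ℝ) (ha1 : a < 1) (C₁ C₂ : ℝ)
    (hC₁ : 208 ≤ C₁) (hC₂ : 16000000 ≤ C₂)
    (hL : 1 / 2 ≤ Real.log ((K : ℝ) * T))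
    (haL : (1 - a) * Real.log ((K : ℝ) * T) ≤ 1 / 2000)
    (k : Fin K) (hk : Real.exp (-(4 * Real.log ((K : ℝ) * T))) ≤ w k)
    (u : EuclideanSpace ℝ (Fin d))
    (hu : ∀ i, |⟪u - Real.sqrt abar • μ k, Real.sqrt abar • μ i - Real.sqrt abar • μ k⟫| ≤
      3 * Real.sqrt (Real.log ((K : ℝ) * T)) * ‖Real.sqrt abar • μ i - Real.sqrt abar • μ k‖) :
    u ∈ Eset d K T w μ abar a C₁ C₂ := by
  have hKT : Real.exp (-Real.log ((K : ℝ) * T)) = 1 / ((K : ℝ) * T) := by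
    rw [Real.exp_neg, Real.exp_log (by positivity), one_div]
  have hK0 : (0 : ℝ) < K := by positivity
  have hT1 : (1 : ℝ) ≤ T := by exact_mod_cast hT
  have hKe : (K : ℝ) * Real.exp (-Real.log ((K : ℝ) * T)) ≤ 1 := by
    rw [hKT, mul_one_div, div_le_one (by positivity)]
    nlinarith
  set L := Real.log ((K : ℝ) * T) with hLd
  have hL0 : 0 < L := by linarith
  have ha : 1 / 2 ≤ a := by nlinarith
  set r := (1 - a) / a ^ 2 with hr
  have hr0 : 0 ≤ r := by
    have : 0 ≤ 1 - a := by linarith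
    positivity
  have hr4 : r ≤ 4 * (1 - a) := by
    rw [hr, div_le_iff₀ (by positivity)]
    have h1 : 1 ≤ 4 * a ^ 2 := by nlinarith
    have h2 : 0 ≤ 1 - a := by linarith
    have h3 := mul_le_mul_of_nonneg_left h1 h2
    linarith
  set c := Real.sqrt abar • μ k with hc
  set e : Fin K → EuclideanSpace ℝ (Fin d) := fun i => Real.sqrt abar • μ i - c with he
  set p : Fin K → ℝ := fun i => postWeight d K w μ abar i u with hp
  have hps : ∑ i, p i = 1 := aux_pw_sum hw k u
  have hp0 : ∀ i, 0 ≤ p i := fun i => (aux_pw_pos hw i u).le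
  have hpe : ∀ i, p i ≤ Real.exp (22 * L - 3 / 8 * ‖e i‖ ^ 2) := by
    intro i
    have h1 : p i = p k * (w i / w k * Real.exp (⟪u - c, e i⟫ - ‖e i‖ ^ 2 / 2)) :=
      aux_pw_ratio hw i k u
    have h2 : p k ≤ 1 := by
      rw [← hps]; exact Finset.single_le_sum (fun i _ => hp0 i) (Finset.mem_univ k)
    have h3 : w i / w k ≤ Real.exp (4 * L) := by
      rw [div_le_iff₀ (hw k)]
      have : Real.exp (4 * L) * Real.exp (-(4 * L)) ≤ Real.exp (4 * L) * w k := by gcongr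
      rw [← Real.exp_add] at this
      simp only [add_neg_cancel, Real.exp_zero] at this
      linarith [hw1 i]
    have h4 : 0 < w i / w k := div_pos (hw i) (hw k)
    rw [h1]
    calc p k * (w i / w k * Real.exp (⟪u - c, e i⟫ - ‖e i‖ ^ 2 / 2))
        ≤ 1 * (Real.exp (4 * L) * Real.exp (⟪u - c, e i⟫ - ‖e i‖ ^ 2 / 2)) := by gcongr
      _ = Real.exp (4 * L + (⟪u - c, e i⟫ - ‖e i‖ ^ 2 / 2)) := by rw [one_mul, ← Real.exp_add]
      _ ≤ _ := by
        refine Real.exp_le_exp.2 ?_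
        have h5 := (abs_le.1 (hu i)).2
        have h6 : Real.sqrt L ^ 2 = L := Real.sq_sqrt hL0.le
        change ⟪u - c, e i⟫ ≤ 3 * Real.sqrt L * ‖e i‖ at h5
        nlinarith [sq_nonneg (‖e i‖ - 12 * Real.sqrt L)]
  have hdet := aux_det p e (u - c) L a r hp0 hps hL hKe hpe hu (by linarith) ha1.le hr0 (by nlinarith)
  refine ⟨?_, ?_⟩
  · refine (aux_trace hab hw k u c).trans (hdet.1.trans ?_)
    rw [← hLd]; gcongr
  · have h1 : ∀ i, -zeta d K w μ abar a i u = _ :=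
      fun i => aux_zeta hw i a (by linarith) u c p hp e he
    simp_rw [h1]
    refine hdet.2.trans ?_
    rw [← hLd]
    have h2 : r ^ 2 ≤ (4 * (1 - a)) ^ 2 := by gcongr
    have h3 : r ^ 2 * (1000000 * L ^ 2) ≤ C₂ * (1 - a) ^ 2 * L ^ 2 := by
      calc r ^ 2 * (1000000 * L ^ 2) ≤ (4 * (1 - a)) ^ 2 * (1000000 * L ^ 2) := by gcongr
        _ = 16000000 * ((1 - a) ^ 2 * L ^ 2) := by ring
        _ ≤ C₂ * ((1 - a) ^ 2 * L ^ 2) := by gcongr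
        _ = _ := by ring
    have := Real.add_one_le_exp (C₂ * (1 - a) ^ 2 * L ^ 2)
    linarith

lemma aux_tail (a : ℝ) (ha : 0 < a) (ha1 : a < 1) (L lam : ℝ) (hL : 0 ≤ L)
    (m e : EuclideanSpace ℝ (Fin d)) (hl : lam ^ 2 * ‖e‖ ^ 2 ≤ 9 * L) :
    ∫⁻ u, ENNReal.ofReal ((2 * Real.pi * a ^ 2) ^ (-(d : ℝ) / 2) *
      Real.exp (-‖u - m‖ ^ 2 / (2 * a ^ 2)) * Real.exp (⟪u - m, lam • e⟫ - 9 * L)) ≤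
      ENNReal.ofReal (Real.exp (-(4 * L))) := by
  rw [aux_gauss_exp a ha]
  refine ENNReal.ofReal_le_ofReal (Real.exp_le_exp.2 ?_)
  rw [norm_smul, mul_pow, Real.norm_eq_abs, sq_abs]
  have : a ^ 2 ≤ 1 := by nlinarith
  have h0 : 0 ≤ lam ^ 2 * ‖e‖ ^ 2 := by positivity
  nlinarith

lemma aux_main (T : ℕ) (hK : 2 ≤ K) (hT : 1 ≤ T) (hw : ∀ k, 0 < w k) (hw1 : ∀ k, w k < 1)
    (hws : ∑ k, w k = 1)
    (hab : 0 ≤ abar) (a : ℝ) (ha0 : 0 < a) (ha1 : a < 1) (C₁ C₂ : ℝ)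
    (hC₁ : 208 ≤ C₁) (hC₂ : 16000000 ≤ C₂)
    (haL : (1 - a) * Real.log ((K : ℝ) * T) ≤ 1 / 2000) :
    ∫⁻ u in (Eset d K T w μ abar a C₁ C₂)ᶜ,
      ENNReal.ofReal ((2 * Real.pi * a ^ 2) ^ (-(d : ℝ) / 2) * ∑ k, w k *
        Real.exp (-‖u - Real.sqrt abar • μ k‖ ^ 2 / (2 * a ^ 2))) ≤
      ENNReal.ofReal (3 * (1 / (T : ℝ) ^ 3)) := by
  have hK2 : (2 : ℝ) ≤ K := by exact_mod_cast hK
  have hT1 : (1 : ℝ) ≤ T := by exact_mod_cast hT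
  have hKT2 : 2 ≤ (K : ℝ) * T := by nlinarith
  have hL : 1 / 2 ≤ Real.log ((K : ℝ) * T) := by
    have h1 := Real.log_le_log (by norm_num) hKT2
    have h2 := Real.log_two_gt_d9
    linarith
  have hexp : Real.exp (-(4 * Real.log ((K : ℝ) * T))) = 1 / ((K : ℝ) * T) ^ 4 := by
    rw [Real.exp_neg, mul_comm, Real.exp_mul, Real.exp_log (by positivity), one_div]
    norm_cast
  have hmem := fun k hk u hu => aux_mem (μ := μ) (abar := abar) T hK hT hw hw1 hab a ha1 C₁ C₂ hC₁ hC₂ hL haL k hk u hu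
  set L := Real.log ((K : ℝ) * T) with hLd
  have hL0 : 0 ≤ L := by linarith
  set m : Fin K → EuclideanSpace ℝ (Fin d) := fun k => Real.sqrt abar • μ k with hm
  set cst := (2 * Real.pi * a ^ 2) ^ (-(d : ℝ) / 2) with hcst
  have hcst0 : 0 < cst := by positivity
  set g : Fin K → EuclideanSpace ℝ (Fin d) → ℝ := fun k u =>
    cst * Real.exp (-‖u - m k‖ ^ 2 / (2 * a ^ 2)) with hg
  have hg0 : ∀ k u, 0 < g k u := fun k u => by simp only [hg]; positivity
  set lam : Fin K → Fin K → ℝ := fun k i => 3 * Real.sqrt L / ‖m i - m k‖ with hlam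
  have hlam2 : ∀ k i, (lam k i) ^ 2 * ‖m i - m k‖ ^ 2 ≤ 9 * L := by
    intro k i
    rcases eq_or_ne (‖m i - m k‖) 0 with h | h
    · rw [h]; simp; exact hL0
    · simp only [hlam]
      rw [div_pow, mul_pow, Real.sq_sqrt hL0]
      field_simp
      norm_num
  set bd : EuclideanSpace ℝ (Fin d) → ENNReal := fun u =>
    ∑ k, (ENNReal.ofReal (Real.exp (-(4 * L))) * ENNReal.ofReal (g k u) +
      ENNReal.ofReal (w k) * ∑ i, (ENNReal.ofReal (g k u * Real.exp (⟪u - m k, lam k i • (m i - m k)⟫ - 9 * L))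
        + ENNReal.ofReal (g k u * Real.exp (⟪u - m k, (-lam k i) • (m i - m k)⟫ - 9 * L)))) with hbd
  have hmeas : MeasurableSet (Eset d K T w μ abar a C₁ C₂)ᶜ :=
    (aux_Eset_closed hw T a C₁ C₂).measurableSet.compl
  have hpt : ∀ u ∈ (Eset d K T w μ abar a C₁ C₂)ᶜ,
      ENNReal.ofReal (cst * ∑ k, w k * Real.exp (-‖u - m k‖ ^ 2 / (2 * a ^ 2))) ≤ bd u := by
    intro u hu
    have e1 : cst * ∑ k, w k * Real.exp (-‖u - m k‖ ^ 2 / (2 * a ^ 2)) = ∑ k, w k * g k u := by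
      rw [Finset.mul_sum]
      refine Finset.sum_congr rfl fun k _ => ?_
      simp only [hg]; ring
    rw [e1, ENNReal.ofReal_sum_of_nonneg fun k _ => mul_nonneg (hw k).le (hg0 k u).le]
    refine Finset.sum_le_sum fun k _ => ?_
    rcases le_or_gt (Real.exp (-(4 * L))) (w k) with hk | hk
    · refine le_trans ?_ le_add_self
      rw [ENNReal.ofReal_mul (hw k).le]
      gcongr
      by_contra hcon
      apply hu
      refine hmem k hk u fun i => ?_
      change |⟪u - m k, m i - m k⟫| ≤ 3 * Real.sqrt L * ‖m i - m k‖
      by_contra hlt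
      push Not at hlt
      apply hcon
      have hD : 0 < ‖m i - m k‖ := by
        rw [norm_pos_iff]
        intro h0
        rw [h0] at hlt
        simp at hlt
      refine le_trans ?_ (Finset.single_le_sum (f := fun i =>
        (ENNReal.ofReal (g k u * Real.exp (⟪u - m k, lam k i • (m i - m k)⟫ - 9 * L))
        + ENNReal.ofReal (g k u * Real.exp (⟪u - m k, (-lam k i) • (m i - m k)⟫ - 9 * L))))
          (fun _ _ => bot_le) (Finset.mem_univ i))
      have hlD : lam k i * (3 * Real.sqrt L * ‖m i - m k‖) = 9 * L := by
        simp only [hlam]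
        field_simp
        rw [Real.sq_sqrt hL0]; norm_num
      have hl0 : 0 ≤ lam k i := by simp only [hlam]; positivity
      rcases lt_abs.1 hlt with h | h
      · refine le_trans (ENNReal.ofReal_le_ofReal ?_) le_self_add
        refine le_mul_of_one_le_right (hg0 k u).le (Real.one_le_exp ?_)
        rw [real_inner_smul_right]
        have := mul_le_mul_of_nonneg_left h.le hl0
        linarith
      · refine le_trans (ENNReal.ofReal_le_ofReal ?_) le_add_self
        refine le_mul_of_one_le_right (hg0 k u).le (Real.one_le_exp ?_)
        rw [real_inner_smul_right]
        have := mul_le_mul_of_nonneg_left h.le hl0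
        linarith
    · refine le_trans ?_ le_self_add
      rw [ENNReal.ofReal_mul (hw k).le]
      gcongr
  refine (setLIntegral_mono' hmeas hpt).trans ((setLIntegral_le_lintegral _ _).trans ?_)
  have hmg : ∀ k, Measurable fun u => ENNReal.ofReal (g k u) := fun k => by
    refine ENNReal.measurable_ofReal.comp (Continuous.measurable ?_)
    simp only [hg]; fun_prop
  have hmh : ∀ k (c : EuclideanSpace ℝ (Fin d)), Measurable fun u =>
      ENNReal.ofReal (g k u * Real.exp (⟪u - m k, c⟫ - 9 * L)) := fun k c => by
    refine ENNReal.measurable_ofReal.comp (Continuous.measurable ?_)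
    simp only [hg]; fun_prop
  simp only [hbd]
  rw [lintegral_finsetSum _ fun k _ => by fun_prop]
  have hk : ∀ k, ∫⁻ u, (ENNReal.ofReal (Real.exp (-(4 * L))) * ENNReal.ofReal (g k u) +
      ENNReal.ofReal (w k) * ∑ i, (ENNReal.ofReal (g k u * Real.exp (⟪u - m k, lam k i • (m i - m k)⟫ - 9 * L))
        + ENNReal.ofReal (g k u * Real.exp (⟪u - m k, (-lam k i) • (m i - m k)⟫ - 9 * L)))) ≤
      ENNReal.ofReal (Real.exp (-(4 * L)) + w k * (K * (2 * Real.exp (-(4 * L))))) := by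
    intro k
    rw [lintegral_add_left (by fun_prop), lintegral_const_mul' _ _ ENNReal.ofReal_ne_top,
      lintegral_const_mul' _ _ ENNReal.ofReal_ne_top, lintegral_finsetSum _ fun i _ => by fun_prop]
    rw [aux_gauss_one a ha0, mul_one, ENNReal.ofReal_add (Real.exp_pos _).le
      (by have := hw k; positivity), ENNReal.ofReal_mul (hw k).le]
    gcongr
    calc _ ≤ ∑ i : Fin K, ENNReal.ofReal (2 * Real.exp (-(4 * L))) := by
          refine Finset.sum_le_sum fun i _ => ?_
          rw [lintegral_add_left (by fun_prop), two_mul,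
            ENNReal.ofReal_add (Real.exp_pos _).le (Real.exp_pos _).le]
          refine add_le_add (aux_tail a ha0 ha1 L _ hL0 _ _ (hlam2 k i))
            (aux_tail a ha0 ha1 L _ hL0 _ _ ?_)
          rw [neg_sq]; exact hlam2 k i
      _ = _ := by
          rw [Finset.sum_const, ENNReal.ofReal_mul (by positivity)]
          simp
  refine (Finset.sum_le_sum fun k _ => hk k).trans ?_
  rw [← ENNReal.ofReal_sum_of_nonneg fun k _ => by have := hw k; positivity]
  refine ENNReal.ofReal_le_ofReal ?_
  rw [Finset.sum_add_distrib, ← Finset.sum_mul, hws]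
  simp only [Finset.sum_const, Finset.card_univ, Fintype.card_fin, nsmul_eq_mul, one_mul]
  rw [hexp]
  have : (K : ℝ) * (1 / ((K : ℝ) * T) ^ 4) ≤ 1 / (T : ℝ) ^ 3 := by
    rw [mul_one_div, div_le_div_iff₀ (by positivity) (by positivity), mul_pow]
    have h1 : (K : ℝ) ≤ K ^ 4 := le_self_pow₀ (by linarith) (by norm_num)
    have h2 : (T : ℝ) ^ 3 ≤ T ^ 4 := pow_le_pow_right₀ hT1 (by norm_num)
    nlinarith [mul_le_mul h1 h2 (by positivity) (by positivity)]
  linarith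

lemma aux_triv (hw : ∀ k, 0 < w k) (hws : ∑ k, w k = 1) (a : ℝ) (ha0 : 0 < a)
    (S : Set (EuclideanSpace ℝ (Fin d))) :
    ∫⁻ u in S,
      ENNReal.ofReal ((2 * Real.pi * a ^ 2) ^ (-(d : ℝ) / 2) * ∑ k, w k *
        Real.exp (-‖u - Real.sqrt abar • μ k‖ ^ 2 / (2 * a ^ 2))) ≤
      ENNReal.ofReal 1 := by
  refine (setLIntegral_le_lintegral _ _).trans ?_
  have : ∀ u, ENNReal.ofReal ((2 * Real.pi * a ^ 2) ^ (-(d : ℝ) / 2) * ∑ k, w k *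
        Real.exp (-‖u - Real.sqrt abar • μ k‖ ^ 2 / (2 * a ^ 2))) =
      ∑ k, ENNReal.ofReal (w k) * ENNReal.ofReal ((2 * Real.pi * a ^ 2) ^ (-(d : ℝ) / 2) *
        Real.exp (-‖u - Real.sqrt abar • μ k‖ ^ 2 / (2 * a ^ 2))) := by
    intro u
    rw [Finset.mul_sum, ENNReal.ofReal_sum_of_nonneg fun k _ => by have := hw k; positivity]
    refine Finset.sum_congr rfl fun k _ => ?_
    rw [← ENNReal.ofReal_mul (hw k).le]
    congr 1
    ring
  simp_rw [this]
  rw [lintegral_finsetSum _ fun k _ => by fun_prop]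
  simp_rw [lintegral_const_mul' _ _ ENNReal.ofReal_ne_top, aux_gauss_one a ha0, mul_one]
  rw [← ENNReal.ofReal_sum_of_nonneg fun k _ => (hw k).le, hws]

end helpers

section helpers
open Filter Topology Asymptotics

/-- normaliser -/
noncomputable def auxN {K : ℕ} (β D : Fin K → ℝ) : ℝ := ∑ i, Real.exp (β i + D i)
/-- soft-max weights -/
noncomputable def auxP {K : ℕ} (β D : Fin K → ℝ) (i : Fin K) : ℝ := Real.exp (β i + D i) / auxN β D
/-- averaged exponent -/
noncomputable def auxW {K : ℕ} (η : ℝ) (c : Fin K → Fin K → Fin K → ℝ) (p D : Fin K → ℝ)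
    (k : Fin K) : ℝ := ∑ i, ∑ j, p i * p j * (η * D i + c i j k)
/-- the function `G` in terms of the exponent gaps -/
noncomputable def auxG {K : ℕ} (η : ℝ) (c : Fin K → Fin K → Fin K → ℝ) (β D : Fin K → ℝ) : ℝ :=
  ∑ k, Real.exp (β k + (1 - η) * D k) / auxN β D * Real.exp (auxW η c (auxP β D) D k)

/-- limiting normaliser -/
noncomputable def auxNi {K : ℕ} (S : Finset (Fin K)) (β D : Fin K → ℝ) : ℝ :=
  ∑ i ∈ S, Real.exp (β i + D i)
/-- limiting weights -/
noncomputable def auxPi {K : ℕ} (S : Finset (Fin K)) (β D : Fin K → ℝ) (i : Fin K) : ℝ :=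
  if i ∈ S then Real.exp (β i + D i) / auxNi S β D else 0
/-- limiting value -/
noncomputable def auxGi {K : ℕ} (S : Finset (Fin K)) (η : ℝ) (c : Fin K → Fin K → Fin K → ℝ)
    (β D : Fin K → ℝ) : ℝ :=
  ∑ k, if k ∈ S then Real.exp (β k + (1 - η) * D k) / auxNi S β D *
    Real.exp (auxW η c (auxPi S β D) D k) else 0

variable {K : ℕ}

lemma auxN_pos (j : Fin K) (β D : Fin K → ℝ) : 0 < auxN β D :=
  Finset.sum_pos (fun _ _ => Real.exp_pos _) ⟨j, Finset.mem_univ _⟩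

lemma auxNi_pos (S : Finset (Fin K)) (j : Fin K) (hj : j ∈ S) (β D : Fin K → ℝ) :
    0 < auxNi S β D :=
  Finset.sum_pos (fun _ _ => Real.exp_pos _) ⟨j, hj⟩

lemma auxNi_eq (S : Finset (Fin K)) (β D : Fin K → ℝ) :
    auxNi S β D = ∑ i, if i ∈ S then Real.exp (β i + D i) else 0 := by
  unfold auxNi
  rw [← Finset.sum_filter]
  simp

/-- (i) limit of `G` -/
lemma aux_lim {α : Type*} (l : Filter α) (S : Finset (Fin K)) (j : Fin K) (hj : j ∈ S) (η : ℝ)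
    (h1 : η < 1) (c : Fin K → Fin K → Fin K → ℝ) (β Ds : Fin K → ℝ)
    (D : α → Fin K → ℝ) (hS : ∀ k ∈ S, Tendsto (fun x => D x k) l (𝓝 (Ds k)))
    (hS' : ∀ k ∉ S, Tendsto (fun x => D x k) l atBot) :
    Tendsto (fun x => auxG η c β (D x)) l (𝓝 (auxGi S η c β Ds)) := by
  have hE : ∀ i, Tendsto (fun x => Real.exp (β i + D x i)) l
      (𝓝 (if i ∈ S then Real.exp (β i + Ds i) else 0)) := by
    intro i
    split_ifs with hi
    · exact (Real.continuous_exp.tendsto _).comp (tendsto_const_nhds.add (hS i hi))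
    · exact Real.tendsto_exp_atBot.comp (tendsto_atBot_add_const_left _ _ (hS' i hi))
  have hN : Tendsto (fun x => auxN β (D x)) l (𝓝 (auxNi S β Ds)) := by
    rw [auxNi_eq]
    exact tendsto_finsetSum _ fun i _ => hE i
  have hN0 := (auxNi_pos S j hj β Ds).ne'
  have hP : ∀ i, Tendsto (fun x => auxP β (D x) i) l (𝓝 (auxPi S β Ds i)) := by
    intro i
    have := (hE i).div hN hN0
    have e : auxPi S β Ds i = (if i ∈ S then Real.exp (β i + Ds i) else 0) / auxNi S β Ds := by
      unfold auxPi
      split_ifs <;> simp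
    rw [e]
    exact this
  have hED : ∀ i ∉ S, Tendsto (fun x => Real.exp (β i + D x i) * D x i) l (𝓝 0) := by
    intro i hi
    have h0 : Tendsto (fun y : ℝ => y * Real.exp (-y)) atTop (𝓝 0) := by
      simpa using Real.tendsto_pow_mul_exp_neg_atTop_nhds_zero 1
    have h2 := (h0.comp (tendsto_neg_atBot_atTop.comp (hS' i hi))).const_mul (-Real.exp (β i))
    rw [mul_zero] at h2
    refine h2.congr fun x => ?_
    simp only [Function.comp, neg_neg]
    rw [Real.exp_add]; ring
  have hPD : ∀ i, Tendsto (fun x => auxP β (D x) i * D x i) l (𝓝 (auxPi S β Ds i * Ds i)) := by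
    intro i
    by_cases hi : i ∈ S
    · exact (hP i).mul (hS i hi)
    · have := (hED i hi).div hN hN0
      unfold auxPi
      rw [if_neg hi, zero_mul]
      rw [zero_div] at this
      refine this.congr fun x => ?_
      simp only [Pi.div_apply]
      unfold auxP; ring
  have hW : ∀ k, Tendsto (fun x => auxW η c (auxP β (D x)) (D x) k) l
      (𝓝 (auxW η c (auxPi S β Ds) Ds k)) := by
    intro k
    unfold auxW
    refine tendsto_finsetSum _ fun i _ => tendsto_finsetSum _ fun j _ => ?_
    have := (((hPD i).mul (hP j)).const_mul η).add (((hP i).mul (hP j)).mul_const (c i j k))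
    have e : auxPi S β Ds i * auxPi S β Ds j * (η * Ds i + c i j k) =
      η * (auxPi S β Ds i * Ds i * auxPi S β Ds j) + auxPi S β Ds i * auxPi S β Ds j * c i j k := by
      ring
    rw [e]
    refine this.congr fun x => ?_
    ring
  unfold auxG auxGi
  refine tendsto_finsetSum _ fun k _ => ?_
  have hWe := (Real.continuous_exp.tendsto _).comp (hW k)
  split_ifs with hk
  · refine Tendsto.mul (Tendsto.div ?_ hN hN0) hWe
    exact (Real.continuous_exp.tendsto _).comp (tendsto_const_nhds.add ((hS k hk).const_mul _))
  · have : Tendsto (fun x => Real.exp (β k + (1 - η) * D x k)) l (𝓝 0) := by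
      refine Real.tendsto_exp_atBot.comp (tendsto_atBot_add_const_left _ _ ?_)
      exact (hS' k hk).const_mul_atBot (by linarith)
    have := (this.div hN hN0).mul hWe
    simpa using this

end helpers

section helpers
open Filter Topology Asymptotics
variable {K : ℕ}

lemma aux_smul_exp_littleo (A B p q : ℝ) (hpq : q < p) :
    (fun s : ℝ => (A + B * s) * Real.exp (-(p * s))) =o[atTop] fun s => Real.exp (-(q * s)) := by
  have h1 : ∀ n : ℕ, (fun s : ℝ => s ^ n * Real.exp (-(p * s))) =o[atTop]
      fun s => Real.exp (-(q * s)) := by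
    intro n
    have h := isLittleO_pow_exp_pos_mul_atTop n (b := p - q) (by linarith)
    have h2 := h.mul_isBigO (isBigO_refl (fun s : ℝ => Real.exp (-(p * s))) atTop)
    refine h2.congr_right fun s => ?_
    rw [← Real.exp_add]; congr 1; ring
  have := ((h1 0).const_mul_left A).add ((h1 1).const_mul_left B)
  refine this.congr_left fun s => ?_
  simp; ring

/-- (ii) lower bound of `G` along a ray -/
lemma aux_ray (S : Finset (Fin K)) (j : Fin K) (hj : j ∈ S) (η : ℝ) (h0 : 0 < η)
    (h1 : η < 1) (c : Fin K → Fin K → Fin K → ℝ) (β Ds δ : Fin K → ℝ)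
    (hS : ∀ k ∈ S, δ k = 0) (hS' : ∀ k ∉ S, 0 < δ k) (k0 : Fin K) (hk0 : k0 ∉ S)
    (hmin : ∀ k ∉ S, δ k0 ≤ δ k) :
    ∃ C : ℝ, 0 < C ∧ ∀ᶠ s : ℝ in atTop,
      auxGi S η c β Ds + C * Real.exp (-((1 - η) * δ k0 * s)) ≤
        auxG η c β (fun k => Ds k - s * δ k) := by
  set D : ℝ → Fin K → ℝ := fun s k => Ds k - s * δ k with hD
  set f : ℝ → ℝ := fun s => Real.exp (-((1 - η) * δ k0 * s)) with hf
  have hd0 := hS' k0 hk0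
  have hlow : ∀ k ∉ S, (1 - η) * δ k0 < δ k := fun k hk => by
    have := hmin k hk
    nlinarith
  have hNpos : ∀ s, 0 < auxN β (D s) := fun s => auxN_pos j β (D s)
  have hNi := auxNi_pos S j hj β Ds
  -- exponentials
  have hE : ∀ i, i ∉ S → ∀ A B : ℝ,
      (fun s => (A + B * s) * Real.exp (β i + D s i)) =o[atTop] f := by
    intro i hi A B
    have := (aux_smul_exp_littleo A B _ _ (hlow i hi)).const_mul_left (Real.exp (β i + Ds i))
    refine this.congr_left fun s => ?_
    have : β i + D s i = (β i + Ds i) + -(δ i * s) := by simp only [hD]; ring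
    rw [this, Real.exp_add (β i + Ds i) (-(δ i * s))]; ring
  have hDS : ∀ i ∈ S, ∀ s, D s i = Ds i := by
    intro i hi s; simp only [hD, hS i hi]; ring
  have hNge : ∀ s, auxNi S β Ds ≤ auxN β (D s) := by
    intro s
    have : auxNi S β Ds = ∑ i ∈ S, Real.exp (β i + D s i) :=
      Finset.sum_congr rfl fun i hi => by rw [hDS i hi]
    rw [this]
    exact Finset.sum_le_sum_of_subset_of_nonneg (Finset.subset_univ _) fun i _ _ => (Real.exp_pos _).le
  have hNinv : (fun s => (auxN β (D s))⁻¹) =O[atTop] fun _ => (1 : ℝ) := by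
    refine IsBigO.of_bound (auxNi S β Ds)⁻¹ (Eventually.of_forall fun s => ?_)
    rw [Real.norm_of_nonneg (inv_pos.2 (hNpos s)).le]
    simp only [norm_one, mul_one]
    exact inv_anti₀ hNi (hNge s)
  have hNdiff : (fun s => auxN β (D s) - auxNi S β Ds) =o[atTop] f := by
    have e : ∀ s, auxN β (D s) - auxNi S β Ds = ∑ i, if i ∈ S then 0 else Real.exp (β i + D s i) := by
      intro s
      rw [auxNi_eq]
      unfold auxN
      rw [← Finset.sum_sub_distrib]
      refine Finset.sum_congr rfl fun i _ => ?_
      split_ifs with hi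
      · rw [hDS i hi, sub_self]
      · rw [sub_zero]
    simp_rw [e]
    refine IsLittleO.fun_sum fun i _ => ?_
    by_cases hi : i ∈ S
    · simp only [if_pos hi]; exact isLittleO_zero _ _
    · simp only [if_neg hi]
      simpa using hE i hi 1 0
  have hNid : (fun s => (auxN β (D s))⁻¹ - (auxNi S β Ds)⁻¹) =o[atTop] f := by
    have := (hNdiff.mul_isBigO hNinv).const_mul_left (-(auxNi S β Ds)⁻¹)
    simp only [mul_one] at this
    refine this.congr_left fun s => ?_
    have := (hNpos s).ne'
    have := hNi.ne'
    field_simp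
    ring
  have hf1 : f =O[atTop] fun _ => (1 : ℝ) := by
    refine IsBigO.of_bound 1 ?_
    filter_upwards [eventually_ge_atTop 0] with s hs
    simp only [hf]
    rw [Real.norm_of_nonneg (Real.exp_pos _).le]
    simp only [norm_one, mul_one]
    refine Real.exp_le_one_iff.2 ?_
    have : 0 ≤ (1 - η) * δ k0 * s := by
      have : 0 < 1 - η := by linarith
      positivity
    linarith
  -- weights
  have hP : ∀ i, (fun s => auxP β (D s) i - auxPi S β Ds i) =o[atTop] f := by
    intro i
    unfold auxP auxPi
    by_cases hi : i ∈ S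
    · simp only [if_pos hi]
      refine (hNid.const_mul_left (Real.exp (β i + Ds i))).congr_left fun s => ?_
      rw [hDS i hi]; ring
    · simp only [if_neg hi]
      have := (hE i hi 1 0).mul_isBigO hNinv
      simp only [mul_one] at this
      refine this.congr_left fun s => ?_
      ring
  have hPle : ∀ i s, auxP β (D s) i ≤ 1 := by
    intro i s
    unfold auxP
    rw [div_le_one (hNpos s)]
    exact Finset.single_le_sum (f := fun i => Real.exp (β i + D s i))
      (fun i _ => (Real.exp_pos _).le) (Finset.mem_univ i)
  have hP0 : ∀ i s, 0 ≤ auxP β (D s) i := fun i s => by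
    unfold auxP; have := hNpos s; positivity
  have hPB : ∀ i, (fun s => auxP β (D s) i) =O[atTop] fun _ => (1 : ℝ) := by
    intro i
    refine IsBigO.of_bound 1 (Eventually.of_forall fun s => ?_)
    rw [Real.norm_of_nonneg (hP0 i s)]
    simpa using hPle i s
  have hPP : ∀ i j, (fun s => auxP β (D s) i * auxP β (D s) j -
      auxPi S β Ds i * auxPi S β Ds j) =o[atTop] f := by
    intro i j
    have h1 := (hP i).mul_isBigO (hPB j)
    simp only [mul_one] at h1
    have := h1.add ((hP j).const_mul_left (auxPi S β Ds i))
    refine this.congr_left fun s => ?_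
    ring
  have hW : ∀ k, (fun s => auxW η c (auxP β (D s)) (D s) k -
      auxW η c (auxPi S β Ds) Ds k) =o[atTop] f := by
    intro k
    unfold auxW
    simp_rw [← Finset.sum_sub_distrib]
    refine IsLittleO.fun_sum fun i _ => IsLittleO.fun_sum fun j _ => ?_
    by_cases hi : i ∈ S
    · refine ((hPP i j).const_mul_left (η * Ds i + c i j k)).congr_left fun s => ?_
      rw [hDS i hi]; ring
    · have hz : auxPi S β Ds i = 0 := by unfold auxPi; rw [if_neg hi]
      rw [hz]
      have := ((hE i hi (η * Ds i + c i j k) (-(η * δ i))).mul_isBigO hNinv).mul_isBigO (hPB j)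
      simp only [mul_one] at this
      refine this.congr_left fun s => ?_
      have e : η * D s i + c i j k = (η * Ds i + c i j k) + -(η * δ i) * s := by
        simp only [hD]; ring
      rw [e]
      unfold auxP
      ring
  have hft : Tendsto f atTop (𝓝 0) := by
    simp only [hf]
    refine Real.tendsto_exp_atBot.comp ?_
    refine tendsto_neg_atTop_atBot.comp (tendsto_id.const_mul_atTop ?_)
    have : 0 < 1 - η := by linarith
    positivity
  have hWt : ∀ k, Tendsto (fun s => auxW η c (auxP β (D s)) (D s) k) atTop
      (𝓝 (auxW η c (auxPi S β Ds) Ds k)) := by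
    intro k
    have := (hW k).trans_tendsto hft
    simpa using this.add_const (auxW η c (auxPi S β Ds) Ds k)
  have hWe : ∀ k, (fun s => Real.exp (auxW η c (auxP β (D s)) (D s) k) -
      Real.exp (auxW η c (auxPi S β Ds) Ds k)) =o[atTop] f := by
    intro k
    have := (Real.hasDerivAt_exp (auxW η c (auxPi S β Ds) Ds k)).isBigO_sub
    exact (this.comp_tendsto (hWt k)).trans_isLittleO (hW k)
  -- terms in S
  set G1 : ℝ → ℝ := fun s => ∑ k, if k ∈ S then Real.exp (β k + (1 - η) * D s k) / auxN β (D s) *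
    Real.exp (auxW η c (auxP β (D s)) (D s) k) else 0 with hG1
  have hG1o : (fun s => G1 s - auxGi S η c β Ds) =o[atTop] f := by
    simp only [hG1, auxGi]
    simp_rw [← Finset.sum_sub_distrib]
    refine IsLittleO.fun_sum fun k _ => ?_
    by_cases hk : k ∈ S
    · simp only [if_pos hk]
      have t1 := (hWe k).mul_isBigO hNinv
      simp only [mul_one] at t1
      have := (t1.const_mul_left (Real.exp (β k + (1 - η) * Ds k))).add
        (hNid.const_mul_left (Real.exp (β k + (1 - η) * Ds k) *
          Real.exp (auxW η c (auxPi S β Ds) Ds k)))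
      refine this.congr_left fun s => ?_
      rw [hDS k hk]; ring
    · simp only [if_neg hk, sub_self]; exact isLittleO_zero _ _
  -- the extra term
  have hNt : Tendsto (fun s => auxN β (D s)) atTop (𝓝 (auxNi S β Ds)) := by
    have := hNdiff.trans_tendsto hft
    simpa using this.add_const (auxNi S β Ds)
  set Q : ℝ := Real.exp (β k0 + (1 - η) * Ds k0) / auxNi S β Ds *
    Real.exp (auxW η c (auxPi S β Ds) Ds k0) with hQ
  have hQ0 : 0 < Q := by positivity
  have hk0t : Tendsto (fun s => Real.exp (β k0 + (1 - η) * Ds k0) / auxN β (D s) *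
    Real.exp (auxW η c (auxP β (D s)) (D s) k0)) atTop (𝓝 Q) :=
    (tendsto_const_nhds.div hNt hNi.ne').mul ((Real.continuous_exp.tendsto _).comp (hWt k0))
  refine ⟨Q / 4, by positivity, ?_⟩
  have ev1 := hk0t.eventually (lt_mem_nhds (show Q / 2 < Q by linarith))
  have ev2 := hG1o.bound (show 0 < Q / 4 by positivity)
  filter_upwards [ev1, ev2] with s hs1 hs2
  have hfpos : 0 < f s := Real.exp_pos _
  rw [Real.norm_eq_abs, Real.norm_of_nonneg hfpos.le] at hs2
  have hs2' := (abs_le.1 hs2).1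
  have hsplit : auxG η c β (D s) = G1 s + ∑ k, if k ∈ S then 0 else
      Real.exp (β k + (1 - η) * D s k) / auxN β (D s) *
        Real.exp (auxW η c (auxP β (D s)) (D s) k) := by
    simp only [hG1, auxG]
    rw [← Finset.sum_add_distrib]
    refine Finset.sum_congr rfl fun k _ => ?_
    split_ifs <;> simp
  have hterm : f s * (Q / 2) ≤ ∑ k, if k ∈ S then 0 else
      Real.exp (β k + (1 - η) * D s k) / auxN β (D s) *
        Real.exp (auxW η c (auxP β (D s)) (D s) k) := by
    refine le_trans ?_ (Finset.single_le_sum (f := fun k => if k ∈ S then 0 else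
      Real.exp (β k + (1 - η) * D s k) / auxN β (D s) *
        Real.exp (auxW η c (auxP β (D s)) (D s) k)) (fun k _ => ?_) (Finset.mem_univ k0))
    · simp only [if_neg hk0]
      have e : β k0 + (1 - η) * D s k0 = (β k0 + (1 - η) * Ds k0) + -((1 - η) * δ k0 * s) := by
        simp only [hD]; ring
      rw [e, Real.exp_add]
      have := mul_le_mul_of_nonneg_left hs1.le hfpos.le
      refine this.trans (le_of_eq ?_)
      simp only [hf]; ring
    · have := hNpos s
      split_ifs
      · exact le_rfl
      · positivity
  change auxGi S η c β Ds + Q / 4 * f s ≤ auxG η c β (D s)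
  rw [hsplit]
  linarith

end helpers

section helpers
open Filter Topology Asymptotics
variable {K : ℕ}

lemma auxP_nonneg (β D : Fin K → ℝ) (i : Fin K) : 0 ≤ auxP β D i := by
  unfold auxP
  have := auxN_pos i β D
  positivity

lemma auxP_sum (j : Fin K) (β D : Fin K → ℝ) : ∑ i, auxP β D i = 1 := by
  unfold auxP
  rw [← Finset.sum_div]
  exact div_self (auxN_pos j β D).ne'

lemma auxN_le (β D D' : Fin K → ℝ) (τ : ℝ) (h : ∀ k, D' k ≤ D k + τ) :
    auxN β D' ≤ Real.exp τ * auxN β D := by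
  unfold auxN
  rw [Finset.mul_sum]
  refine Finset.sum_le_sum fun i _ => ?_
  rw [← Real.exp_add]
  exact Real.exp_le_exp.2 (by linarith [h i])

lemma auxP_le (β D D' : Fin K → ℝ) (τ : ℝ) (h : ∀ k, |D' k - D k| ≤ τ) (i : Fin K) :
    auxP β D' i ≤ Real.exp (2 * τ) * auxP β D i := by
  have h1 := auxN_pos i β D
  have h2 := auxN_pos i β D'
  have h3 := auxN_le β D' D τ (fun k => by linarith [(abs_le.1 (h k)).1])
  have h4 : Real.exp (β i + D' i) ≤ Real.exp τ * Real.exp (β i + D i) := by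
    rw [← Real.exp_add]
    exact Real.exp_le_exp.2 (by linarith [(abs_le.1 (h i)).2])
  unfold auxP
  rw [div_le_iff₀ h2, show Real.exp (2 * τ) = Real.exp τ * Real.exp τ by
    rw [← Real.exp_add]; congr 1; ring]
  calc Real.exp (β i + D' i) ≤ Real.exp τ * Real.exp (β i + D i) := h4
    _ = Real.exp τ * (Real.exp (β i + D i) / auxN β D * auxN β D) := by
      rw [div_mul_cancel₀ _ h1.ne']
    _ ≤ Real.exp τ * (Real.exp (β i + D i) / auxN β D * (Real.exp τ * auxN β D')) := by
      gcongr
    _ = _ := by ring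

lemma auxPP_le (β D D' : Fin K → ℝ) (τ : ℝ) (h : ∀ k, |D' k - D k| ≤ τ) (i j : Fin K) :
    auxP β D' i * auxP β D' j ≤ Real.exp (4 * τ) * (auxP β D i * auxP β D j) := by
  have := mul_le_mul (auxP_le β D D' τ h i) (auxP_le β D D' τ h j) (auxP_nonneg _ _ _)
    (mul_nonneg (Real.exp_pos _).le (auxP_nonneg _ _ _))
  refine this.trans (le_of_eq ?_)
  rw [show Real.exp (4 * τ) = Real.exp (2 * τ) * Real.exp (2 * τ) by
    rw [← Real.exp_add]; congr 1; ring]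
  ring

lemma auxPP_abs (β D D' : Fin K → ℝ) (τ : ℝ) (h0 : 0 ≤ τ) (hτ : 4 * τ ≤ 1)
    (h : ∀ k, |D' k - D k| ≤ τ) (i j : Fin K) :
    |auxP β D' i * auxP β D' j - auxP β D i * auxP β D j| ≤
      8 * τ * (auxP β D i * auxP β D j) := by
  have a1 := auxPP_le β D D' τ h i j
  have a2 := auxPP_le β D' D τ (fun k => by rw [abs_sub_comm]; exact h k) i j
  have p1 := mul_nonneg (auxP_nonneg β D i) (auxP_nonneg β D j)
  have e1 := Real.abs_exp_sub_one_le (x := 4 * τ) (by rw [abs_of_nonneg (by linarith)]; exact hτ)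
  rw [abs_of_nonneg (by linarith : (0:ℝ) ≤ 4 * τ)] at e1
  have e2 := (abs_le.1 e1).2
  have e3 : Real.exp (-(4 * τ)) ≥ 1 - 4 * τ := by linarith [Real.add_one_le_exp (-(4 * τ))]
  have a3 : Real.exp (-(4 * τ)) * (auxP β D i * auxP β D j) ≤ auxP β D' i * auxP β D' j := by
    have := mul_le_mul_of_nonneg_left a2 (Real.exp_pos (-(4 * τ))).le
    rwa [← mul_assoc (Real.exp (-(4 * τ))) (Real.exp (4 * τ)), ← Real.exp_add, neg_add_cancel,
      Real.exp_zero, one_mul] at this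
  rw [abs_le]
  constructor
  · nlinarith
  · nlinarith

lemma auxW_lip (η : ℝ) (h0 : 0 ≤ η) (h1 : η ≤ 1) (c : Fin K → Fin K → Fin K → ℝ)
    (β D D' : Fin K → ℝ) (τ M Cc : ℝ) (hτ0 : 0 ≤ τ) (hτ : 4 * τ ≤ 1)
    (h : ∀ k, |D' k - D k| ≤ τ) (hM : ∀ k, |D k| ≤ M) (hc : ∀ i j k, |c i j k| ≤ Cc) (k : Fin K) :
    auxW η c (auxP β D) D k - τ * (1 + 8 * (M + Cc)) ≤ auxW η c (auxP β D') D' k := by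
  have s2 : ∀ B : Fin K → ℝ, ∑ i, ∑ j, auxP β B i * auxP β B j = 1 := by
    intro B
    simp_rw [← Finset.mul_sum, auxP_sum k, mul_one]
    exact auxP_sum k β B
  have key : ∀ i j, auxP β D i * auxP β D j * (η * D i + c i j k)
      - 8 * τ * (M + Cc) * (auxP β D i * auxP β D j) - τ * (auxP β D' i * auxP β D' j)
      ≤ auxP β D' i * auxP β D' j * (η * D' i + c i j k) := by
    intro i j
    have a := auxPP_abs β D D' τ hτ0 hτ h i j
    have p' := mul_nonneg (auxP_nonneg β D' i) (auxP_nonneg β D' j)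
    have p := mul_nonneg (auxP_nonneg β D i) (auxP_nonneg β D j)
    set P := auxP β D i * auxP β D j
    set P' := auxP β D' i * auxP β D' j
    have hx : |η * D i + c i j k| ≤ M + Cc := by
      refine (abs_add_le _ _).trans (add_le_add ?_ (hc i j k))
      rw [abs_mul, abs_of_nonneg h0]
      have := hM i
      nlinarith [abs_nonneg (D i)]
    have hy : |(P' - P) * (η * D i + c i j k)| ≤ 8 * τ * P * (M + Cc) := by
      rw [abs_mul]
      exact mul_le_mul a hx (abs_nonneg _) (by positivity)
    have hy' := (abs_le.1 hy).1
    have hz : -τ ≤ η * (D' i - D i) := by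
      have := (abs_le.1 (h i)).1
      nlinarith
    have hz' := mul_le_mul_of_nonneg_left hz p'
    nlinarith
  have := Finset.sum_le_sum fun i (_ : i ∈ Finset.univ) =>
    Finset.sum_le_sum fun j (_ : j ∈ Finset.univ) => key i j
  have e : ∑ i, ∑ j, (auxP β D i * auxP β D j * (η * D i + c i j k)
      - 8 * τ * (M + Cc) * (auxP β D i * auxP β D j) - τ * (auxP β D' i * auxP β D' j)) =
      auxW η c (auxP β D) D k - 8 * τ * (M + Cc) * (∑ i, ∑ j, auxP β D i * auxP β D j) -
        τ * ∑ i, ∑ j, auxP β D' i * auxP β D' j := by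
    unfold auxW
    simp only [Finset.sum_sub_distrib, Finset.mul_sum]
  rw [e, s2, s2] at this
  unfold auxW at this ⊢
  linarith

lemma auxG_lip (η : ℝ) (h0 : 0 ≤ η) (h1 : η ≤ 1) (c : Fin K → Fin K → Fin K → ℝ)
    (β D D' : Fin K → ℝ) (τ M Cc : ℝ) (hτ0 : 0 ≤ τ) (hτ : 4 * τ ≤ 1)
    (h : ∀ k, |D' k - D k| ≤ τ) (hM : ∀ k, |D k| ≤ M) (hc : ∀ i j k, |c i j k| ≤ Cc) :
    auxG η c β D * Real.exp (-(τ * (3 + 8 * (M + Cc)))) ≤ auxG η c β D' := by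
  unfold auxG
  rw [Finset.sum_mul]
  refine Finset.sum_le_sum fun k _ => ?_
  have hw := auxW_lip η h0 h1 c β D D' τ M Cc hτ0 hτ h hM hc k
  have n1 := auxN_pos k β D
  have n2 := auxN_pos k β D'
  have h3 := auxN_le β D D' τ (fun k => by linarith [(abs_le.1 (h k)).2])
  have hinv : Real.exp (-τ) / auxN β D ≤ 1 / auxN β D' := by
    rw [div_le_div_iff₀ n1 n2, one_mul]
    have := mul_le_mul_of_nonneg_left h3 (Real.exp_pos (-τ)).le
    rwa [← mul_assoc, ← Real.exp_add, neg_add_cancel, Real.exp_zero, one_mul] at this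
  have hA : Real.exp (β k + (1 - η) * D k - τ) ≤ Real.exp (β k + (1 - η) * D' k) := by
    refine Real.exp_le_exp.2 ?_
    have := (abs_le.1 (h k)).1
    nlinarith
  have hB := Real.exp_le_exp.2 hw
  calc _ = Real.exp (β k + (1 - η) * D k - τ) * (Real.exp (-τ) / auxN β D) *
        Real.exp (auxW η c (auxP β D) D k - τ * (1 + 8 * (M + Cc))) := by
        rw [show -(τ * (3 + 8 * (M + Cc))) = -τ + -τ + -(τ * (1 + 8 * (M + Cc))) by ring,
          show β k + (1 - η) * D k - τ = β k + (1 - η) * D k + -τ by ring,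
          show auxW η c (auxP β D) D k - τ * (1 + 8 * (M + Cc)) =
            auxW η c (auxP β D) D k + -(τ * (1 + 8 * (M + Cc))) by ring,
          Real.exp_add (β k + (1 - η) * D k) (-τ),
          Real.exp_add (auxW η c (auxP β D) D k) (-(τ * (1 + 8 * (M + Cc)))),
          Real.exp_add (-τ + -τ) (-(τ * (1 + 8 * (M + Cc)))), Real.exp_add (-τ) (-τ)]
        ring
    _ ≤ Real.exp (β k + (1 - η) * D' k) * (1 / auxN β D') *
        Real.exp (auxW η c (auxP β D') D' k) := by gcongr
    _ = _ := by ring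

end helpers

section helpers
open Filter Topology Asymptotics
variable {K d : ℕ}

/-- (iv) extraction of a ray -/
lemma aux_extract (m : Fin K → EuclideanSpace ℝ (Fin d)) (k' : Fin K)
    (u : ℕ → EuclideanSpace ℝ (Fin d)) (hu : Tendsto (fun n => ‖u n‖) atTop atTop) :
    ∃ (j : Fin K) (S : Finset (Fin K)) (us v : EuclideanSpace ℝ (Fin d)) (φ : ℕ → ℕ),
      StrictMono φ ∧ j ∈ S ∧ v ≠ 0 ∧
      (∀ k ∈ S, Tendsto (fun n => ⟪u (φ n), m k - m j⟫) atTop (𝓝 ⟪us, m k - m j⟫)) ∧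
      (∀ k ∉ S, Tendsto (fun n => ⟪u (φ n), m k - m j⟫) atTop atBot) ∧
      (∀ k ∈ S, ⟪v, m k - m j⟫ = 0) ∧ (∀ k ∉ S, ⟪v, m k - m j⟫ < 0) := by
  classical
  have hne : Nonempty (Fin K) := ⟨k'⟩
  have hmax : ∀ n, ∃ j, ∀ k, ⟪u n, m k⟫ ≤ ⟪u n, m j⟫ := fun n =>
    Finite.exists_max fun k => ⟪u n, m k⟫
  choose jn hjn using hmax
  let F : ℕ → Fin K × (Fin K → Set.Icc (0:ℝ) 1) := fun n =>
    (jn n, fun k => ⟨Real.exp ⟪u n, m k - m (jn n)⟫, (Real.exp_pos _).le, by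
      rw [Real.exp_le_one_iff, inner_sub_right]; linarith [hjn n k]⟩)
  obtain ⟨⟨j, t⟩, φ, hφ, hlim⟩ := CompactSpace.tendsto_subseq F
  have hl1 : Tendsto (fun n => jn (φ n)) atTop (𝓝 j) := (continuous_fst.tendsto _).comp hlim
  rw [nhds_discrete, tendsto_pure] at hl1
  have hl2 : ∀ k, Tendsto (fun n => Real.exp ⟪u (φ n), m k - m j⟫) atTop (𝓝 (t k : ℝ)) := by
    intro k
    have h := ((continuous_subtype_val.comp ((continuous_apply k).comp continuous_snd)).tendsto
      (j, t)).comp hlim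
    refine h.congr' ?_
    filter_upwards [hl1] with n hn
    simp [F, hn]
  let S : Finset (Fin K) := Finset.univ.filter fun k => (t k : ℝ) ≠ 0
  have hSm : ∀ k, k ∈ S ↔ (t k : ℝ) ≠ 0 := by intro k; simp [S]
  have hin : ∀ k ∈ S, Tendsto (fun n => ⟪u (φ n), m k - m j⟫) atTop (𝓝 (Real.log (t k))) := by
    intro k hk
    have := ((Real.continuousAt_log ((hSm k).1 hk)).tendsto).comp (hl2 k)
    refine this.congr fun n => ?_
    simp
  have hout : ∀ k ∉ S, Tendsto (fun n => ⟪u (φ n), m k - m j⟫) atTop atBot := by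
    intro k hk
    have : (t k : ℝ) = 0 := by by_contra h; exact hk ((hSm k).2 h)
    have h := hl2 k
    rw [this] at h
    exact Real.tendsto_exp_comp_nhds_zero.1 h
  have hjS : j ∈ S := by
    rw [hSm]
    have := hl2 j
    simp only [sub_self, inner_zero_right, Real.exp_zero] at this
    rw [tendsto_nhds_unique this tendsto_const_nhds]
    exact one_ne_zero
  -- the linear map
  let A : EuclideanSpace ℝ (Fin d) →ₗ[ℝ] (Fin K → ℝ) :=
    { toFun := fun x k => if k ∈ S then ⟪x, m k - m j⟫ else 0
      map_add' := by
        intro x y; ext k; simp only [Pi.add_apply]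
        split_ifs
        · rw [inner_add_left]
        · simp
      map_smul' := by
        intro r x; ext k; simp only [Pi.smul_apply, RingHom.id_apply, smul_eq_mul]
        split_ifs
        · rw [real_inner_smul_left]
        · simp }
  have hA : ∀ x k, A x k = if k ∈ S then ⟪x, m k - m j⟫ else 0 := fun x k => rfl
  have hAt : Tendsto (fun n => A (u (φ n))) atTop
      (𝓝 (fun k => if k ∈ S then Real.log (t k) else 0)) := by
    rw [tendsto_pi_nhds]
    intro k
    simp only [hA]
    split_ifs with hk
    · exact hin k hk
    · exact tendsto_const_nhds
  have hcl : IsClosed ((LinearMap.range A : Submodule ℝ (Fin K → ℝ)) : Set (Fin K → ℝ)) :=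
    Submodule.closed_of_finiteDimensional _
  obtain ⟨us, hus⟩ : ∃ us, A us = fun k => if k ∈ S then Real.log (t k) else 0 := by
    have := hcl.mem_of_tendsto hAt (Eventually.of_forall fun n => ⟨_, rfl⟩)
    exact this
  have hus' : ∀ k ∈ S, ⟪us, m k - m j⟫ = Real.log (t k) := by
    intro k hk
    have := congrFun hus k
    simpa [hA, hk] using this
  obtain ⟨R, hR⟩ := LinearMap.exists_rightInverse_of_surjective A.rangeRestrict
    (LinearMap.range_rangeRestrict A)
  have hRc : Continuous R := LinearMap.continuous_of_finiteDimensional R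
  let z : ℕ → EuclideanSpace ℝ (Fin d) := fun n => R (A.rangeRestrict (u (φ n) - us))
  have hz : Tendsto z atTop (𝓝 0) := by
    have h1 : Tendsto (fun n => A.rangeRestrict (u (φ n) - us)) atTop (𝓝 0) := by
      rw [tendsto_subtype_rng]
      have h2 := hAt.sub_const (fun k => if k ∈ S then Real.log (t k) else 0)
      rw [sub_self] at h2
      refine h2.congr fun n => ?_
      rw [← hus, ← map_sub]
      rfl
    have := (hRc.tendsto 0).comp h1
    rwa [map_zero] at this
  have hAz : ∀ n, A (z n) = A (u (φ n) - us) := by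
    intro n
    have := LinearMap.congr_fun hR (A.rangeRestrict (u (φ n) - us))
    exact congrArg Subtype.val this
  have hv0 : ∀ n, ∀ k ∈ S, ⟪u (φ n) - us - z n, m k - m j⟫ = 0 := by
    intro n k hk
    have := congrFun (hAz n) k
    simp only [hA, if_pos hk] at this
    rw [inner_sub_left, this, sub_self]
  have hv1 : ∀ k ∉ S, ∀ᶠ n in atTop, ⟪u (φ n) - us - z n, m k - m j⟫ < 0 := by
    intro k hk
    have hzk : Tendsto (fun n => ⟪z n, m k - m j⟫) atTop (𝓝 0) := by
      have := hz.inner (𝕜 := ℝ) (tendsto_const_nhds (x := m k - m j))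
      simpa using this
    have e1 := hzk.eventually (lt_mem_nhds (show (-1:ℝ) < 0 by norm_num))
    have e2 := (hout k hk).eventually (eventually_lt_atBot (⟪us, m k - m j⟫ - 1))
    filter_upwards [e1, e2] with n h1 h2
    rw [inner_sub_left, inner_sub_left]
    linarith
  have hvne : ∀ᶠ n in atTop, u (φ n) - us - z n ≠ 0 := by
    have e1 := (hu.comp hφ.tendsto_atTop).eventually (eventually_gt_atTop (‖us‖ + 1))
    have e2 := hz.norm.eventually (gt_mem_nhds (show ‖(0 : EuclideanSpace ℝ (Fin d))‖ < 1 by simp))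
    filter_upwards [e1, e2] with n h1 h2 h3
    have h4 : u (φ n) = us + z n := by
      rw [sub_sub, sub_eq_zero] at h3; exact h3
    have := norm_add_le us (z n)
    simp only [Function.comp] at h1
    rw [h4] at h1
    linarith
  have hall : ∀ᶠ n in atTop, ∀ k, k ∉ S → ⟪u (φ n) - us - z n, m k - m j⟫ < 0 := by
    rw [eventually_all]
    intro k
    by_cases hk : k ∈ S
    · exact Eventually.of_forall fun n h => absurd hk h
    · filter_upwards [hv1 k hk] with n hn _ using hn
  obtain ⟨n, hn1, hn2⟩ := (hvne.and hall).exists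
  refine ⟨j, S, us, u (φ n) - us - z n, φ, hφ, hjS, hn1, ?_, hout, hv0 n, hn2⟩
  intro k hk
  rw [hus' k hk]
  exact hin k hk

end helpers

section helpers
open Filter Topology Asymptotics
variable {K d : ℕ}

/-- an unbounded super-level set of `G` contains a ray of exponentially small balls -/
lemma aux_balls (m : Fin K → EuclideanSpace ℝ (Fin d)) (k' : Fin K) (η : ℝ) (h0 : 0 < η)
    (h1 : η < 1) (c : Fin K → Fin K → Fin K → ℝ) (b : Fin K → ℝ)
    (G : EuclideanSpace ℝ (Fin d) → ℝ)
    (hG : ∀ j u, G u = auxG η c (fun k => b k - b j) (fun k => ⟪u, m k - m j⟫))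
    (L : ℝ) (hL : 0 < L) (hop : IsOpen {u | L < G u})
    (hun : ¬ Bornology.IsBounded {u | L < G u}) :
    ∃ (x0 v : EuclideanSpace ℝ (Fin d)) (κ : ℝ), v ≠ 0 ∧ 0 < κ ∧
      ∀ᶠ s : ℝ in atTop, Metric.ball (x0 + s • v) (Real.exp (-(κ * s))) ⊆ {u | L < G u} := by
  classical
  have hex : ∀ n : ℕ, ∃ u, L < G u ∧ (n : ℝ) ≤ ‖u‖ := by
    intro n
    by_contra hcon
    push Not at hcon
    refine hun ((Metric.isBounded_ball (x := (0 : EuclideanSpace ℝ (Fin d))) (r := n)).subset ?_)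
    intro u hu
    simpa using hcon u hu
  choose u huL hun using hex
  have hut : Tendsto (fun n => ‖u n‖) atTop atTop :=
    tendsto_atTop_mono hun tendsto_natCast_atTop_atTop
  obtain ⟨j, S, us, v, φ, hφ, hjS, hv, hin, hout, hv0, hv1⟩ := aux_extract m k' u hut
  set β : Fin K → ℝ := fun k => b k - b j with hβ
  set Ds : Fin K → ℝ := fun k => ⟪us, m k - m j⟫ with hDs
  have hGj := hG j
  have hGi : L ≤ auxGi S η c β Ds := by
    have := aux_lim atTop S j hjS η h1 c β Ds (fun n k => ⟪u (φ n), m k - m j⟫) hin hout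
    refine ge_of_tendsto this (Eventually.of_forall fun n => ?_)
    rw [← hGj]
    exact (huL _).le
  by_cases hS : ∀ k, k ∈ S
  · have hinv : ∀ y (s : ℝ), G (y - s • v) = G y := by
      intro y s
      rw [hGj, hGj]
      congr 1
      ext k
      rw [inner_sub_left, real_inner_smul_left, hv0 k (hS k)]
      ring
    obtain ⟨r, hr, hball⟩ := Metric.isOpen_iff.1 hop (u 0) (huL 0)
    refine ⟨u 0, v, 1, hv, one_pos, ?_⟩
    have ht : Tendsto (fun s : ℝ => Real.exp (-(1 * s))) atTop (𝓝 0) := by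
      simp only [one_mul]
      exact Real.tendsto_exp_neg_atTop_nhds_zero
    filter_upwards [ht.eventually (gt_mem_nhds hr)] with s hs y hy
    have : y - s • v ∈ Metric.ball (u 0) r := by
      rw [Metric.mem_ball, dist_eq_norm] at hy ⊢
      have e : y - s • v - u 0 = y - (u 0 + s • v) := by abel
      rw [e]; linarith
    have := hball this
    simp only [Set.mem_ofPred_eq] at this ⊢
    rwa [hinv] at this
  · push Not at hS
    obtain ⟨k1, hk1⟩ := hS
    set δ : Fin K → ℝ := fun k => -⟪v, m k - m j⟫ with hδ
    obtain ⟨k0, hk0, hmin⟩ := Finset.exists_min_image (Finset.univ.filter fun k => k ∉ S) δ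
      ⟨k1, by simpa using hk1⟩
    simp only [Finset.mem_filter, Finset.mem_univ, true_and] at hk0 hmin
    have hd : ∀ k ∉ S, 0 < δ k := fun k hk => by simp only [hδ]; linarith [hv1 k hk]
    obtain ⟨C, hC, hev⟩ := aux_ray S j hjS η h0 h1 c β Ds δ
      (fun k hk => by simp only [hδ, hv0 k hk, neg_zero]) hd k0 hk0 hmin
    set q : ℝ := (1 - η) * δ k0 with hq
    have hq0 : 0 < q := mul_pos (by linarith) (hd k0 hk0)
    set R : ℝ := 1 + ∑ k, ‖m k - m j‖ with hR
    have hRk : ∀ k, ‖m k - m j‖ ≤ R := by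
      intro k
      have := Finset.single_le_sum (f := fun k => ‖m k - m j‖) (fun i _ => norm_nonneg _)
        (Finset.mem_univ k)
      linarith
    have hR1 : 1 ≤ R := by
      have : 0 ≤ ∑ k, ‖m k - m j‖ := Finset.sum_nonneg fun i _ => norm_nonneg _
      linarith
    set Cc : ℝ := ∑ i, ∑ j, ∑ k, |c i j k| with hCc
    have hc : ∀ i j k, |c i j k| ≤ Cc := by
      intro i j k
      refine (Finset.single_le_sum (f := fun k => |c i j k|) (fun i _ => abs_nonneg _)
        (Finset.mem_univ k)).trans ?_
      refine (Finset.single_le_sum (f := fun j => ∑ k, |c i j k|)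
        (fun i _ => Finset.sum_nonneg fun _ _ => abs_nonneg _) (Finset.mem_univ j)).trans ?_
      exact (Finset.single_le_sum (f := fun i => ∑ j, ∑ k, |c i j k|)
        (fun i _ => Finset.sum_nonneg fun _ _ => Finset.sum_nonneg fun _ _ => abs_nonneg _)
        (Finset.mem_univ i))
    have hCc0 : 0 ≤ Cc := Finset.sum_nonneg fun _ _ => Finset.sum_nonneg fun _ _ =>
      Finset.sum_nonneg fun _ _ => abs_nonneg _
    have hsmall := aux_smul_exp_littleo (R * (3 + 8 * (R * ‖us‖ + Cc)) * (auxGi S η c β Ds + C))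
      (R * 8 * R * ‖v‖ * (auxGi S η c β Ds + C)) (q + 1) q (by linarith)
    have ev2 := hsmall.bound (show 0 < C / 2 by positivity)
    have ht : Tendsto (fun s : ℝ => 4 * (R * Real.exp (-((q + 1) * s)))) atTop (𝓝 0) := by
      have : Tendsto (fun s : ℝ => Real.exp (-((q + 1) * s))) atTop (𝓝 0) :=
        Real.tendsto_exp_atBot.comp (tendsto_neg_atTop_atBot.comp
          (tendsto_id.const_mul_atTop (by linarith)))
      simpa using (this.const_mul R).const_mul 4
    refine ⟨us, v, q + 1, hv, by linarith, ?_⟩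
    filter_upwards [hev, ev2, ht.eventually (gt_mem_nhds one_pos), eventually_ge_atTop 0] with
      s hs1 hs2 hs3 hs0 y hy
    set ε : ℝ := Real.exp (-((q + 1) * s)) with hε
    have hε0 : 0 < ε := Real.exp_pos _
    set D : Fin K → ℝ := fun k => Ds k - s * δ k with hD
    have hDe : ∀ k, D k = ⟪us + s • v, m k - m j⟫ := by
      intro k
      simp only [hD, hDs, hδ]
      rw [inner_add_left, real_inner_smul_left]; ring
    have hDM : ∀ k, |D k| ≤ R * ‖us‖ + s * (R * ‖v‖) := by
      intro k
      rw [hDe]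
      refine (abs_real_inner_le_norm _ _).trans ?_
      have : ‖us + s • v‖ ≤ ‖us‖ + s * ‖v‖ := by
        refine (norm_add_le _ _).trans ?_
        rw [norm_smul, Real.norm_of_nonneg hs0]
      calc ‖us + s • v‖ * ‖m k - m j‖ ≤ (‖us‖ + s * ‖v‖) * R :=
            mul_le_mul this (hRk k) (norm_nonneg _) (by positivity)
        _ = _ := by ring
    have hdiff : ∀ k, |⟪y, m k - m j⟫ - D k| ≤ R * ε := by
      intro k
      rw [hDe, ← inner_sub_left]
      refine (abs_real_inner_le_norm _ _).trans ?_
      rw [Metric.mem_ball, dist_eq_norm] at hy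
      calc _ ≤ ε * R := mul_le_mul hy.le (hRk k) (norm_nonneg _) hε0.le
        _ = _ := by ring
    have hlip := auxG_lip η h0.le h1.le c β D (fun k => ⟪y, m k - m j⟫) (R * ε) _ Cc
      (by positivity) hs3.le hdiff hDM hc
    rw [← hGj] at hlip
    simp only [Set.mem_ofPred_eq]
    refine lt_of_lt_of_le ?_ hlip
    set g := auxGi S η c β Ds with hg
    set Z : ℝ := R * ε * (3 + 8 * (R * ‖us‖ + s * (R * ‖v‖) + Cc)) with hZ
    have hZ0 : 0 ≤ Z := by positivity
    have hf0 : 0 < Real.exp (-(q * s)) := Real.exp_pos _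
    have hf1 : Real.exp (-(q * s)) ≤ 1 := by
      rw [Real.exp_le_one_iff]
      have : 0 ≤ q * s := by positivity
      linarith
    have hZs : Z * (g + C) ≤ C / 2 * Real.exp (-(q * s)) := by
      rw [Real.norm_eq_abs, Real.norm_of_nonneg hf0.le] at hs2
      refine le_trans (le_of_eq ?_) ((le_abs_self _).trans hs2)
      rw [hZ]; ring
    have hexp : 1 - Z ≤ Real.exp (-Z) := by linarith [Real.add_one_le_exp (-Z)]
    have hgf : g + C * Real.exp (-(q * s)) ≤ g + C := by nlinarith
    have hgpos : 0 < g := lt_of_lt_of_le hL hGi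
    calc L ≤ g := hGi
      _ < g + C * Real.exp (-(q * s)) - Z * (g + C) := by
        have : 0 < C * Real.exp (-(q * s)) := by positivity
        linarith
      _ ≤ (g + C * Real.exp (-(q * s))) * (1 - Z) := by nlinarith
      _ ≤ (g + C * Real.exp (-(q * s))) * Real.exp (-Z) := by gcongr
      _ ≤ _ := by gcongr

end helpers

section helpers
variable {d K : ℕ} {w : Fin K → ℝ} {μ : Fin K → EuclideanSpace ℝ (Fin d)} {abar : ℝ}

lemma aux_pw_auxP (hw : ∀ k, 0 < w k) (j k : Fin K) (u : EuclideanSpace ℝ (Fin d)) :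
    postWeight d K w μ abar k u =
      auxP (fun k => (Real.log (w k) - ‖Real.sqrt abar • μ k‖ ^ 2 / 2) -
        (Real.log (w j) - ‖Real.sqrt abar • μ j‖ ^ 2 / 2))
        (fun k => ⟪u, Real.sqrt abar • μ k - Real.sqrt abar • μ j⟫) k := by
  set m := fun k => Real.sqrt abar • μ k with hm
  have e : ∀ i, w i * Real.exp (-‖u - m i‖ ^ 2 / 2) =
      w j * Real.exp (-‖u - m j‖ ^ 2 / 2) * Real.exp ((Real.log (w i) - ‖m i‖ ^ 2 / 2) -
        (Real.log (w j) - ‖m j‖ ^ 2 / 2) + ⟪u, m i - m j⟫) := by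
    intro i
    nth_rewrite 1 [← Real.exp_log (hw i)]
    nth_rewrite 1 [← Real.exp_log (hw j)]
    rw [← Real.exp_add, ← Real.exp_add, ← Real.exp_add]
    congr 1
    rw [norm_sub_sq_real, norm_sub_sq_real, inner_sub_right]
    ring
  unfold postWeight auxP auxN
  change w k * Real.exp (-‖u - m k‖ ^ 2 / 2) / ∑ i, w i * Real.exp (-‖u - m i‖ ^ 2 / 2) = _
  rw [Finset.sum_congr rfl fun i _ => e i, e k, ← Finset.mul_sum,
    mul_div_mul_left _ _ (mul_pos (hw j) (Real.exp_pos _)).ne']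

lemma aux_conn (hw : ∀ k, 0 < w k) (a : ℝ) (ha : 0 < a) (j : Fin K)
    (u : EuclideanSpace ℝ (Fin d)) :
    ∑ k, postWeight d K w μ abar k u * Real.exp (-(zeta d K w μ abar a k u)) =
      auxG ((a - 1) / a) (fun i j k => (1 - a) / a ^ 2 *
          (-((1 + a) / 2 * (‖Real.sqrt abar • μ k‖ ^ 2 - ‖Real.sqrt abar • μ i‖ ^ 2)) -
            ⟪Real.sqrt abar • μ i, Real.sqrt abar • μ j⟫ +
            ⟪Real.sqrt abar • μ i, Real.sqrt abar • μ k⟫))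
        (fun k => (Real.log (w k) - ‖Real.sqrt abar • μ k‖ ^ 2 / 2) -
          (Real.log (w j) - ‖Real.sqrt abar • μ j‖ ^ 2 / 2))
        (fun k => ⟪u, Real.sqrt abar • μ k - Real.sqrt abar • μ j⟫) := by
  have hz := fun k => aux_zeta (abar := abar) (μ := μ) hw k a ha.ne' u 0 _ rfl _ rfl
  have hps := aux_pw_sum (abar := abar) (μ := μ) hw j u
  have hpw := fun k => aux_pw_auxP (abar := abar) (μ := μ) hw j k u
  simp only [sub_zero] at hz
  set m := fun k => Real.sqrt abar • μ k with hm
  change ∀ k, -zeta d K w μ abar a k u = _ at hz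
  set D : Fin K → ℝ := fun k => ⟪u, m k - m j⟫ with hD
  set β : Fin K → ℝ := fun k => (Real.log (w k) - ‖m k‖ ^ 2 / 2) -
          (Real.log (w j) - ‖m j‖ ^ 2 / 2) with hβ
  have hpw' : ∀ k, postWeight d K w μ abar k u = auxP β D k := hpw
  simp only [hpw'] at hz hps ⊢
  set p := auxP β D with hp
  unfold auxG
  refine Finset.sum_congr rfl fun k _ => ?_
  have hzk := hz k
  have hW : auxW ((a - 1) / a) (fun i j k => (1 - a) / a ^ 2 *
          (-((1 + a) / 2 * (‖m k‖ ^ 2 - ‖m i‖ ^ 2)) - ⟪m i, m j⟫ + ⟪m i, m k⟫)) p D k =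
      (a - 1) / a * D k + -zeta d K w μ abar a k u := by
    rw [hzk]
    set M := ∑ i, p i • m i with hM
    have eM : ⟪u, M⟫ = ⟪u, m j⟫ + ∑ i, p i * D i := by
      have : ∀ i, p i * D i = p i * ⟪u, m i⟫ - p i * ⟪u, m j⟫ := fun i => by
        simp only [hD]; rw [inner_sub_right]; ring
      simp_rw [this]
      rw [Finset.sum_sub_distrib, ← Finset.sum_mul, hps, hM, inner_sum]
      simp_rw [real_inner_smul_right]
      ring
    have eMk : ⟪M, m k⟫ = ∑ i, p i * ⟪m i, m k⟫ := by
      rw [hM, sum_inner]; simp_rw [real_inner_smul_left]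
    have eMM : ‖M‖ ^ 2 = ∑ i, p i * ∑ j, p j * ⟪m i, m j⟫ := by
      rw [← real_inner_self_eq_norm_sq]
      nth_rewrite 1 [hM]
      rw [sum_inner]
      refine Finset.sum_congr rfl fun i _ => ?_
      rw [real_inner_smul_left, hM, inner_sum]
      simp_rw [real_inner_smul_right]
    have hin : ∀ i, ∑ j, p i * p j * ((a - 1) / a * D i + (1 - a) / a ^ 2 *
          (-((1 + a) / 2 * (‖m k‖ ^ 2 - ‖m i‖ ^ 2)) - ⟪m i, m j⟫ + ⟪m i, m k⟫)) =
        (a - 1) / a * (p i * D i) + (1 - a) / a ^ 2 * (-((1 + a) / 2 * (p i * ‖m k‖ ^ 2 - p i * ‖m i‖ ^ 2))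
          - p i * ∑ j, p j * ⟪m i, m j⟫ + p i * ⟪m i, m k⟫) := by
      intro i
      have : ∀ j, p i * p j * ((a - 1) / a * D i + (1 - a) / a ^ 2 *
          (-((1 + a) / 2 * (‖m k‖ ^ 2 - ‖m i‖ ^ 2)) - ⟪m i, m j⟫ + ⟪m i, m k⟫)) =
          p j * (p i * ((a - 1) / a * D i + (1 - a) / a ^ 2 *
          (-((1 + a) / 2 * (‖m k‖ ^ 2 - ‖m i‖ ^ 2)) + ⟪m i, m k⟫))) -
          (1 - a) / a ^ 2 * p i * (p j * ⟪m i, m j⟫) := fun j => by ring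
      simp_rw [this]
      rw [Finset.sum_sub_distrib, ← Finset.sum_mul, hps, ← Finset.mul_sum]
      ring
    unfold auxW
    simp_rw [hin]
    rw [Finset.sum_add_distrib, ← Finset.mul_sum, ← Finset.mul_sum, Finset.sum_add_distrib,
      Finset.sum_sub_distrib, Finset.sum_neg_distrib, ← Finset.mul_sum, Finset.sum_sub_distrib,
      ← Finset.sum_mul, hps, eM, eMk, eMM]
    have eD : D k = ⟪u, m k⟫ - ⟪u, m j⟫ := by simp only [hD]; rw [inner_sub_right]
    rw [eD]
    change _ = _ + (1 - a) / a ^ 2 * (a * (⟪u, m k⟫ - _) - (1 + a) / 2 * (‖m k‖ ^ 2 - _) - _ + _)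
    field_simp
    ring
  change p k * _ = _
  rw [hW, hp]
  unfold auxP
  rw [div_mul_eq_mul_div, div_mul_eq_mul_div, ← Real.exp_add, ← Real.exp_add]
  congr 2
  ring

end helpers

section helpers
open Filter Topology
variable {d K : ℕ} {w : Fin K → ℝ} {μ : Fin K → EuclideanSpace ℝ (Fin d)} {abar : ℝ}

lemma aux_low (a : ℝ) (ha : 1 < a) (y m : EuclideanSpace ℝ (Fin d)) (Λ : ℝ) (hΛ : 0 ≤ Λ) :
    ∃ r0 : ℝ, ∀ u : EuclideanSpace ℝ (Fin d), r0 ≤ ‖u‖ →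
      Real.exp (Λ * ‖u‖) ≤ Real.exp (-‖y - u‖ ^ 2 / (2 * a * (1 - a))) *
        Real.exp (-‖u - m‖ ^ 2 / (2 * a ^ 2)) := by
  set A : ℝ := 1 / (2 * a * (a - 1)) with hA
  set B : ℝ := 1 / (2 * a ^ 2) with hB
  have ha1 : 0 < a - 1 := by linarith
  have ha0 : 0 < a := by linarith
  have hA0 : 0 < A := by positivity
  have hB0 : 0 < B := by positivity
  have hq : 0 < A - B := by
    rw [sub_pos, hA, hB]
    apply one_div_lt_one_div_of_lt (by positivity)
    nlinarith
  set X := ‖y‖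
  set Y := ‖m‖
  have hX : 0 ≤ X := norm_nonneg _
  have hY : 0 ≤ Y := norm_nonneg _
  refine ⟨X + 1 + (Λ + 2 * A * X + 2 * B * Y + B * Y ^ 2) / (A - B), fun u hu => ?_⟩
  have e1 : -‖y - u‖ ^ 2 / (2 * a * (1 - a)) = A * ‖y - u‖ ^ 2 := by
    have : (1 - a) ≠ 0 := by linarith
    rw [hA]
    have : a - 1 ≠ 0 := ha1.ne'
    field_simp
    ring
  have e2 : -‖u - m‖ ^ 2 / (2 * a ^ 2) = -(B * ‖u - m‖ ^ 2) := by
    rw [hB]; ring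
  rw [e1, e2, ← Real.exp_add]
  refine Real.exp_le_exp.2 ?_
  set r := ‖u‖
  have hnn : 0 ≤ (Λ + 2 * A * X + 2 * B * Y + B * Y ^ 2) / (A - B) := by positivity
  have h1 : r - X ≤ ‖y - u‖ := by
    have := norm_sub_norm_le u y
    rw [norm_sub_rev] at this
    exact this
  have h2 : ‖u - m‖ ≤ r + Y := norm_sub_le _ _
  have hrX : 0 ≤ r - X := by linarith
  have hr1 : 1 ≤ r := by linarith
  have h3 : (r - X) ^ 2 ≤ ‖y - u‖ ^ 2 := by gcongr
  have h4 : ‖u - m‖ ^ 2 ≤ (r + Y) ^ 2 := by gcongr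
  have h5 : Λ + 2 * A * X + 2 * B * Y + B * Y ^ 2 ≤ (A - B) * r := by
    have : (Λ + 2 * A * X + 2 * B * Y + B * Y ^ 2) / (A - B) ≤ r := by linarith
    rw [div_le_iff₀ hq] at this
    linarith
  have h6 := mul_le_mul_of_nonneg_left h3 hA0.le
  have h7 := mul_le_mul_of_nonneg_left h4 hB0.le
  have h8 := mul_le_mul_of_nonneg_left h5 (by linarith : 0 ≤ r)
  have h9 : B * Y ^ 2 ≤ B * Y ^ 2 * r := le_mul_of_one_le_right (by positivity) hr1
  have h10 : 0 ≤ A * X ^ 2 := by positivity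
  nlinarith

lemma aux_nonint (hd : 1 ≤ d) (a : ℝ) (ha : 1 < a) (c0 : ℝ) (hc0 : 0 < c0) (k : Fin K)
    (hw : ∀ k, 0 < w k) (m : Fin K → EuclideanSpace ℝ (Fin d)) (y : EuclideanSpace ℝ (Fin d))
    (E : Set (EuclideanSpace ℝ (Fin d))) (x0 v : EuclideanSpace ℝ (Fin d)) (κ : ℝ)
    (hv : v ≠ 0) (hκ : 0 < κ)
    (hE : ∀ᶠ s : ℝ in atTop, Metric.ball (x0 + s • v) (Real.exp (-(κ * s))) ⊆ E) :
    ¬ IntegrableOn (fun u => c0 * Real.exp (-‖y - u‖ ^ 2 / (2 * a * (1 - a))) *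
      ∑ k, w k * Real.exp (-‖u - m k‖ ^ 2 / (2 * a ^ 2))) E volume := by
  intro hIntgr
  set f := fun u => c0 * Real.exp (-‖y - u‖ ^ 2 / (2 * a * (1 - a))) *
      ∑ k, w k * Real.exp (-‖u - m k‖ ^ 2 / (2 * a ^ 2)) with hf
  have hf0 : ∀ u, 0 ≤ f u := fun u =>
    mul_nonneg (by positivity) (Finset.sum_nonneg fun i _ => mul_nonneg (hw i).le (Real.exp_pos _).le)
  have : Nonempty (Fin d) := ⟨⟨0, hd⟩⟩
  have hv0 : 0 < ‖v‖ := norm_pos_iff.2 hv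
  set Λ : ℝ := 2 * (κ * d + 1) / ‖v‖ with hΛ
  obtain ⟨r0, hr0⟩ := aux_low a ha y (m k) Λ (by positivity)
  set V : ℝ := (volume (Metric.ball (0 : EuclideanSpace ℝ (Fin d)) 1)).toReal with hV
  have hV0 : 0 < V := ENNReal.toReal_pos (Metric.measure_ball_pos volume _ one_pos).ne'
    measure_ball_lt_top.ne
  have hbig : Tendsto (fun s : ℝ => c0 * w k * V * Real.exp s) atTop atTop :=
    Real.tendsto_exp_atTop.const_mul_atTop (by have := hw k; positivity)
  obtain ⟨s, hsE, hs1, hs2, hs3, hs0⟩ := (hE.and ((hbig.eventually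
    (eventually_gt_atTop (∫ u in E, f u))).and ((eventually_ge_atTop ((2 * (‖x0‖ + 1)) / ‖v‖)).and
      ((eventually_ge_atTop ((2 * r0) / ‖v‖)).and (eventually_ge_atTop 0))))).exists
  rw [div_le_iff₀ hv0] at hs2 hs3
  set ε := Real.exp (-(κ * s)) with hε
  have hε0 : 0 < ε := Real.exp_pos _
  have hε1 : ε ≤ 1 := by
    rw [hε, Real.exp_le_one_iff]
    have : 0 ≤ κ * s := by positivity
    linarith
  have hlow : ∀ u ∈ Metric.ball (x0 + s • v) ε, c0 * w k * Real.exp ((κ * d + 1) * s) ≤ f u := by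
    intro u hu
    rw [Metric.mem_ball, dist_eq_norm] at hu
    have hn : s * ‖v‖ / 2 ≤ ‖u‖ := by
      have h1 : ‖s • v‖ = s * ‖v‖ := by rw [norm_smul, Real.norm_of_nonneg hs0]
      have h2 : s • v = u - x0 - (u - (x0 + s • v)) := by abel
      have h3 : ‖s • v‖ ≤ ‖u‖ + ‖x0‖ + ‖u - (x0 + s • v)‖ := by
        nth_rewrite 1 [h2]
        exact (norm_sub_le _ _).trans (by gcongr; exact norm_sub_le _ _)
      linarith
    have h4 := hr0 u (by linarith)
    have h5 : Real.exp ((κ * d + 1) * s) ≤ Real.exp (Λ * ‖u‖) := by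
      refine Real.exp_le_exp.2 ?_
      have : Λ * (s * ‖v‖ / 2) = (κ * d + 1) * s := by
        rw [hΛ]; field_simp
      rw [← this]
      have : 0 ≤ Λ := by positivity
      gcongr
    have h6 := h5.trans h4
    calc c0 * w k * Real.exp ((κ * d + 1) * s)
        ≤ c0 * w k * (Real.exp (-‖y - u‖ ^ 2 / (2 * a * (1 - a))) *
          Real.exp (-‖u - m k‖ ^ 2 / (2 * a ^ 2))) := by
          have := hw k
          gcongr
      _ = c0 * Real.exp (-‖y - u‖ ^ 2 / (2 * a * (1 - a))) *
          (w k * Real.exp (-‖u - m k‖ ^ 2 / (2 * a ^ 2))) := by ring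
      _ ≤ f u := by
        simp only [hf]
        gcongr
        exact Finset.single_le_sum (f := fun k => w k * Real.exp (-‖u - m k‖ ^ 2 / (2 * a ^ 2)))
          (fun i _ => mul_nonneg (hw i).le (Real.exp_pos _).le) (Finset.mem_univ k)
  have hi1 := setIntegral_ge_of_const_le_real (μ := volume) (Metric.isOpen_ball.measurableSet)
    measure_ball_lt_top.ne hlow (hIntgr.mono_set hsE)
  have hi2 := setIntegral_mono_set (s := Metric.ball (x0 + s • v) ε) hIntgr (Eventually.of_forall fun u => hf0 u)
    (Eventually.of_forall fun u hu => hsE hu)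
  have hvol : volume.real (Metric.ball (x0 + s • v) ε) = ε ^ d * V := by
    rw [Measure.real, Measure.addHaar_ball _ _ hε0.le, ENNReal.toReal_mul,
      ENNReal.toReal_ofReal (by positivity), finrank_euclideanSpace_fin]
  rw [hvol] at hi1
  have he : c0 * w k * Real.exp ((κ * d + 1) * s) * (ε ^ d * V) = c0 * w k * V * Real.exp s := by
    have : Real.exp ((κ * d + 1) * s) * ε ^ d = Real.exp s := by
      rw [hε, ← Real.exp_nat_mul, ← Real.exp_add]
      congr 1; ring
    rw [← this]; ring
  rw [he] at hi1
  linarith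

lemma aux_not_int_const (hd : 1 ≤ d) (F : EuclideanSpace ℝ (Fin d) → ℝ) (c : ℝ) (hc : 0 < c)
    (h : ∀ x, c ≤ F x) : ¬ Integrable F volume := by
  intro hF
  have : Nonempty (Fin d) := ⟨⟨0, hd⟩⟩
  have hnc : NoncompactSpace (EuclideanSpace ℝ (Fin d)) := NormedSpace.noncompactSpace ℝ _
  have h1 : Integrable (fun _ : EuclideanSpace ℝ (Fin d) => c) volume := by
    refine hF.mono' aestronglyMeasurable_const (Eventually.of_forall fun x => ?_)
    rw [Real.norm_of_nonneg hc.le]; exact h x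
  rcases integrable_const_iff.1 h1 with h2 | h2
  · exact hc.ne' h2
  · exact (measure_ne_top (volume : Measure (EuclideanSpace ℝ (Fin d))) Set.univ)
      (measure_univ_of_isAddLeftInvariant _)

lemma aux_integral_const (hd : 1 ≤ d) (c : ℝ) :
    ∫ _ : EuclideanSpace ℝ (Fin d), c = 0 := by
  have : Nonempty (Fin d) := ⟨⟨0, hd⟩⟩
  have hnc : NoncompactSpace (EuclideanSpace ℝ (Fin d)) := NormedSpace.noncompactSpace ℝ _
  rw [integral_const, Measure.real, measure_univ_of_isAddLeftInvariant]
  simp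

/-- the degenerate case `a > 1` -/
lemma aux_gt_one (hd : 1 ≤ d) (T : ℕ) (hw : ∀ k, 0 < w k) (k' : Fin K) (a : ℝ) (ha : 1 < a)
    (C₁ C₂ : ℝ) (htr : ∀ x, Matrix.trace (1 + gmmJac d K w μ abar x) ≤ C₁ * Real.log ((K : ℝ) * T)) :
    (∫ x, (∫ u in (Eset d K T w μ abar a C₁ C₂)ᶜ,
      (4 * Real.pi ^ 2 * a ^ 2 * (1 - a)) ^ (-(d : ℝ) / 2) *
        Real.exp (-‖Real.sqrt a • x - u‖ ^ 2 / (2 * a * (1 - a))) *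
        ∑ k, w k * Real.exp (-‖u - Real.sqrt abar • μ k‖ ^ 2 / (2 * a ^ 2)))) ≤ 0 := by
  set c0 := (4 * Real.pi ^ 2 * a ^ 2 * (1 - a)) ^ (-(d : ℝ) / 2) with hc0
  set E := (Eset d K T w μ abar a C₁ C₂)ᶜ with hE
  set ψ := fun u => ∑ k, w k * Real.exp (-‖u - Real.sqrt abar • μ k‖ ^ 2 / (2 * a ^ 2)) with hψ
  have hψ0 : ∀ u, 0 < ψ u := fun u =>
    Finset.sum_pos (fun i _ => mul_pos (hw i) (Real.exp_pos _)) ⟨k', Finset.mem_univ _⟩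
  have hψc : Continuous ψ := by fun_prop
  have hEo : IsOpen E := (aux_Eset_closed hw T a C₁ C₂).isOpen_compl
  rcases le_or_gt c0 0 with hc | hc
  · refine integral_nonpos fun x => ?_
    refine integral_nonpos fun u => ?_
    exact mul_nonpos_of_nonpos_of_nonneg (mul_nonpos_of_nonpos_of_nonneg hc (Real.exp_pos _).le)
      (hψ0 u).le
  by_cases hb : Bornology.IsBounded E
  · rcases Set.eq_empty_or_nonempty E with he | hne
    · rw [he]; simp
    refine (integral_undef ?_).le
    have hIntgr : ∀ g : EuclideanSpace ℝ (Fin d) → ℝ, Continuous g → IntegrableOn g E volume := by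
      intro g hg
      obtain ⟨R, hR⟩ := hb.subset_closedBall 0
      exact (hg.continuousOn.integrableOn_compact (isCompact_closedBall 0 R)).mono_set hR
    have hpos : 0 < ∫ u in E, c0 * ψ u := by
      rw [setIntegral_pos_iff_support_of_nonneg_ae
        (Eventually.of_forall fun u => (mul_pos hc (hψ0 u)).le) (hIntgr _ (by fun_prop))]
      have : Function.support (fun u => c0 * ψ u) = Set.univ := by
        ext u; simp [hc.ne', (hψ0 u).ne']
      rw [this, Set.univ_inter]
      exact hEo.measure_pos _ hne
    refine aux_not_int_const hd _ _ hpos fun x => ?_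
    refine setIntegral_mono (hIntgr _ (by fun_prop)) (hIntgr _ (by fun_prop)) fun u => ?_
    have : 1 ≤ Real.exp (-‖Real.sqrt a • x - u‖ ^ 2 / (2 * a * (1 - a))) := by
      refine Real.one_le_exp ?_
      refine div_nonneg_of_nonpos (by simp) ?_
      nlinarith
    simp only
    refine mul_le_mul_of_nonneg_right ?_ (hψ0 u).le
    exact le_mul_of_one_le_right hc.le this
  · have hEG : E = {u | Real.exp (C₂ * (1 - a) ^ 2 * Real.log ((K : ℝ) * T) ^ 2) <
        ∑ k, postWeight d K w μ abar k u * Real.exp (-(zeta d K w μ abar a k u))} := by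
      ext u
      simp only [hE, Eset, Set.mem_compl_iff, Set.mem_ofPred_eq, htr u, true_and, not_le]
    have ha0 : 0 < a := by linarith
    obtain ⟨x0, v, κ, hv, hκ, hev⟩ := aux_balls (fun k => Real.sqrt abar • μ k) k' ((a - 1) / a)
      (div_pos (by linarith) ha0) (by rw [div_lt_one ha0]; linarith) _
      (fun k => Real.log (w k) - ‖Real.sqrt abar • μ k‖ ^ 2 / 2)
      (fun u => ∑ k, postWeight d K w μ abar k u * Real.exp (-(zeta d K w μ abar a k u)))
      (fun j u => aux_conn hw a ha0 j u) _ (Real.exp_pos _) (hEG ▸ hEo) (hEG ▸ hb)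
    rw [← hEG] at hev
    have : ∀ x, ∫ u in E, c0 * Real.exp (-‖Real.sqrt a • x - u‖ ^ 2 / (2 * a * (1 - a))) * ψ u = 0 :=
      fun x => integral_undef (aux_nonint hd a ha c0 hc k' hw (fun k => Real.sqrt abar • μ k)
        (Real.sqrt a • x) E x0 v κ hv hκ hev)
    change ∫ x, (∫ u in E, c0 * Real.exp (-‖Real.sqrt a • x - u‖ ^ 2 / (2 * a * (1 - a))) * ψ u) ≤ 0
    simp_rw [this]
    simp

end helpers

section helpers
open Filter Topology

lemma aux_le_one {d K : ℕ} {w : Fin K → ℝ} {μ : Fin K → EuclideanSpace ℝ (Fin d)} {abar : ℝ}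
    (hd : 1 ≤ d) (T : ℕ) (hw : ∀ k, 0 < w k) (hws : ∑ k, w k = 1) (k' : Fin K) (a : ℝ)
    (C₁ C₂ : ℝ) (htr : 1 < a → ∀ x, Matrix.trace (1 + gmmJac d K w μ abar x) ≤
      C₁ * Real.log ((K : ℝ) * T)) :
    (∫ x, (∫ u in (Eset d K T w μ abar a C₁ C₂)ᶜ,
      (4 * Real.pi ^ 2 * a ^ 2 * (1 - a)) ^ (-(d : ℝ) / 2) *
        Real.exp (-‖Real.sqrt a • x - u‖ ^ 2 / (2 * a * (1 - a))) *
        ∑ k, w k * Real.exp (-‖u - Real.sqrt abar • μ k‖ ^ 2 / (2 * a ^ 2)))) ≤ 1 := by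
  have hd0 : -(d : ℝ) / 2 ≠ 0 := by
    have : (1 : ℝ) ≤ d := by exact_mod_cast hd
    intro h
    linarith
  rcases lt_trichotomy a 0 with h | h | h
  · simp only [Real.sqrt_eq_zero_of_nonpos h.le, zero_smul]
    rw [aux_integral_const hd]
    exact zero_le_one
  · have : 4 * Real.pi ^ 2 * a ^ 2 * (1 - a) = 0 := by rw [h]; ring
    simp only [this, Real.zero_rpow hd0, zero_mul, integral_zero]
    exact zero_le_one
  rcases lt_trichotomy a 1 with h1 | h1 | h1
  · exact aux_double a h h1 _ _ (by fun_prop)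
      (fun u => Finset.sum_nonneg fun i _ => mul_nonneg (hw i).le (Real.exp_pos _).le) 1 zero_le_one
      (aux_triv hw hws a h _)
  · have : 4 * Real.pi ^ 2 * a ^ 2 * (1 - a) = 0 := by rw [h1]; ring
    simp only [this, Real.zero_rpow hd0, zero_mul, integral_zero]
    exact zero_le_one
  · exact (aux_gt_one hd T hw k' a h1 C₁ C₂ (htr h1)).trans zero_le_one

/-- growth bound for the (possibly chaotic) logistic recursion -/
noncomputable def auxB (c₁ : ℝ) : ℕ → ℝ
  | 0 => 1
  | n + 1 => auxB c₁ n + c₁ * auxB c₁ n * (1 + auxB c₁ n)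

lemma auxB_nonneg (c₁ : ℝ) (hc : 0 ≤ c₁) (n : ℕ) : 0 ≤ auxB c₁ n := by
  induction n with
  | zero => simp [auxB]
  | succ n ih => simp only [auxB]; positivity

lemma aux_abar_bound (c₀ c₁ : ℝ) (h0 : 0 ≤ c₀) (h1 : 0 ≤ c₁) (T : ℕ) (hT : 1 ≤ T) (αbar : ℕ → ℝ)
    (hTT : αbar T = (T : ℝ) ^ (-c₀))
    (hrec : ∀ t : ℕ, 2 ≤ t → t ≤ T →
      αbar (t - 1) = αbar t + c₁ * (Real.log T / T) * αbar t * (1 - αbar t)) :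
    ∀ n, n < T → |αbar (T - n)| ≤ auxB c₁ n := by
  have hT1 : (1 : ℝ) ≤ T := by exact_mod_cast hT
  intro n
  induction n with
  | zero =>
    intro _
    simp only [Nat.sub_zero, auxB, hTT]
    rw [abs_of_nonneg (by positivity)]
    exact Real.rpow_le_one_of_one_le_of_nonpos hT1 (by linarith)
  | succ n ih =>
    intro hn
    have ih := ih (by omega)
    have := hrec (T - n) (by omega) (by omega)
    rw [show T - (n + 1) = T - n - 1 by omega, this]
    have hb := auxB_nonneg c₁ h1 n
    have hl0 : 0 ≤ Real.log T / T := div_nonneg (Real.log_nonneg hT1) (by linarith)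
    have hl1 : Real.log T / T ≤ 1 := by
      rw [div_le_one (by linarith)]
      exact (Real.log_le_sub_one_of_pos (by linarith)).trans (by linarith)
    simp only [auxB]
    refine (abs_add_le _ _).trans (add_le_add ih ?_)
    rw [abs_mul, abs_mul, abs_mul, abs_of_nonneg h1, abs_of_nonneg hl0]
    have h2 : |1 - αbar (T - n)| ≤ 1 + auxB c₁ n := by
      refine (abs_sub _ _).trans ?_
      rw [abs_one]; linarith
    have h3 : c₁ * (Real.log T / T) ≤ c₁ := mul_le_of_le_one_right h1 hl1
    gcongr

lemma aux_abar_mem (c₀ c₁ : ℝ) (h0 : 0 < c₀) (T : ℕ) (hT : 2 ≤ T) (h : ℝ) (hh0 : 0 < h)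
    (hh : h ≤ 1 / 2) (hdef : h = c₁ * (Real.log T / T)) (αbar : ℕ → ℝ)
    (hTT : αbar T = (T : ℝ) ^ (-c₀))
    (hrec : ∀ t : ℕ, 2 ≤ t → t ≤ T →
      αbar (t - 1) = αbar t + c₁ * (Real.log T / T) * αbar t * (1 - αbar t)) :
    ∀ n, n < T → 0 < αbar (T - n) ∧ αbar (T - n) < 1 := by
  have hT1 : (1 : ℝ) < T := by exact_mod_cast hT
  intro n
  induction n with
  | zero =>
    intro _
    simp only [Nat.sub_zero, hTT]
    exact ⟨by positivity, Real.rpow_lt_one_of_one_lt_of_neg hT1 (by linarith)⟩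
  | succ n ih =>
    intro hn
    obtain ⟨i1, i2⟩ := ih (by omega)
    have := hrec (T - n) (by omega) (by omega)
    rw [show T - (n + 1) = T - n - 1 by omega, this, ← hdef]
    have i3 : 0 < 1 - αbar (T - n) := by linarith
    have i4 : 0 < h * αbar (T - n) := by positivity
    constructor
    · positivity
    · have : h * αbar (T - n) < 1 := by nlinarith
      nlinarith

end helpers

/-- Claim (60). For every `t ∈ [T]`, the function
`δ_{t−1}(x) := ∫_{E_t^c} (4π² α_t² (1−α_t))^{−d/2} exp(−‖√α_t x − u‖²/(2α_t(1−α_t)))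
  ∑_k π_k exp(−‖u − √ᾱ_t μ_k‖²/(2α_t²)) du`
satisfies `∫ δ_{t−1} ≤ C (T^{−3} + (1−α_t)² log²(KT))` for some absolute constant `C > 0`. -/
theorem stmt12 :
    ∀ cR : ℝ, 0 < cR →
      ∃ c₀₀ c₁₀ : ℝ, 0 < c₀₀ ∧ 0 < c₁₀ ∧
        ∀ c₀ c₁ : ℝ, c₀₀ ≤ c₀ → c₁₀ ≤ c₁ → 4 < c₁ / c₀ →
          ∃ C₁ C₂ C : ℝ, 0 < C₁ ∧ 0 < C₂ ∧ 0 < C ∧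
            ∀ (d K T : ℕ), 1 ≤ d → 1 ≤ K → 1 ≤ T →
              ∀ (w : Fin K → ℝ) (μ : Fin K → EuclideanSpace ℝ (Fin d)),
                (∀ k, w k ∈ Set.Ioo (0 : ℝ) 1) → (∑ k, w k = 1) →
                (∀ k, ‖μ k‖ ≤ (T : ℝ) ^ cR) →
                ∀ (αbar α : ℕ → ℝ),
                  αbar T = (T : ℝ) ^ (-c₀) →
                  (∀ t : ℕ, 2 ≤ t → t ≤ T →
                    αbar (t - 1) = αbar t + c₁ * (Real.log T / T) * αbar t * (1 - αbar t)) →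
                  (∀ t : ℕ, 2 ≤ t → t ≤ T → α t = αbar t / αbar (t - 1)) →
                  α 1 = αbar 1 →
                  ∀ t : ℕ, 1 ≤ t → t ≤ T →
                    (∫ x, (∫ u in (Eset d K T w μ (αbar t) (α t) C₁ C₂)ᶜ,
                        (4 * Real.pi ^ 2 * (α t) ^ 2 * (1 - α t)) ^ (-(d : ℝ) / 2) *
                          Real.exp (-‖Real.sqrt (α t) • x - u‖ ^ 2 /
                            (2 * α t * (1 - α t))) *
                          ∑ k, w k *
                            Real.exp (-‖u - Real.sqrt (αbar t) • μ k‖ ^ 2 /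
                              (2 * (α t) ^ 2)))) ≤
                      C * (1 / (T : ℝ) ^ 3 +
                        (1 - α t) ^ 2 * Real.log ((K : ℝ) * T) ^ 2) := by
  intro cR hcR
  refine ⟨1, 1, one_pos, one_pos, ?_⟩
  intro c₀ c₁ hc₀ hc₁ _
  have hc₀0 : 0 < c₀ := by linarith
  have hc₁0 : 0 < c₁ := by linarith
  -- threshold
  obtain ⟨T0, hT0⟩ : ∃ T0 : ℕ, ∀ T : ℕ, T0 ≤ T → c₁ * (Real.log T / T) ≤ 1 / 2 := by
    have h1 : Filter.Tendsto (fun T : ℕ => c₁ * (Real.log T / T)) Filter.atTop (nhds 0) := by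
      have := (Real.isLittleO_log_id_atTop.tendsto_div_nhds_zero).comp
        (tendsto_natCast_atTop_atTop (R := ℝ))
      have := this.const_mul c₁
      rw [mul_zero] at this
      exact this
    have h2 := h1.eventually (gt_mem_nhds (show (0 : ℝ) < 1 / 2 by norm_num))
    obtain ⟨N, hN⟩ := Filter.eventually_atTop.1 h2
    exact ⟨N, fun T hT => (hN T hT).le⟩
  set M : ℝ := ∑ n ∈ Finset.range (T0 + 1), auxB c₁ n with hM
  have hM0 : 0 ≤ M := Finset.sum_nonneg fun n _ => auxB_nonneg c₁ hc₁0.le n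
  have hMn : ∀ n, n ≤ T0 → auxB c₁ n ≤ M := fun n hn =>
    Finset.single_le_sum (f := fun n => auxB c₁ n) (fun n _ => auxB_nonneg c₁ hc₁0.le n)
      (Finset.mem_range.2 (by omega))
  have hlog2 : 0 < Real.log 2 := Real.log_pos (by norm_num)
  set C₁ : ℝ := 208 + M * ((T0 : ℝ) ^ cR) ^ 2 / Real.log 2 with hC₁
  have hC₁' : 208 ≤ C₁ := by
    have : 0 ≤ M * ((T0 : ℝ) ^ cR) ^ 2 / Real.log 2 := by positivity
    linarith
  refine ⟨C₁, 16000000, 4000000 + (T0 : ℝ) ^ 3, by linarith, by norm_num, by positivity, ?_⟩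
  intro d K T hd hK hT w μ hw hws hμ αbar α hTT hrec hα hα1 t ht1 htT
  have hw0 : ∀ k, 0 < w k := fun k => (hw k).1
  have k' : Fin K := ⟨0, hK⟩
  have hK2 : 2 ≤ K := by
    by_contra hcon
    have : K = 1 := by omega
    subst this
    have := (hw 0).2
    simp at hws
    linarith
  have hT1 : (1 : ℝ) ≤ T := by exact_mod_cast hT
  have hK2' : (2 : ℝ) ≤ K := by exact_mod_cast hK2
  have hlogKT : Real.log 2 ≤ Real.log ((K : ℝ) * T) :=
    Real.log_le_log (by norm_num) (by nlinarith)
  have hT3 : 0 < (T : ℝ) ^ 3 := by positivity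
  have hsq : 0 ≤ (1 - α t) ^ 2 * Real.log ((K : ℝ) * T) ^ 2 := by positivity
  by_cases hTT0 : T ≤ T0
  · -- small `T`
    have hT0' : (T : ℝ) ≤ T0 := by exact_mod_cast hTT0
    refine (aux_le_one hd T hw0 hws k' (α t) C₁ 16000000 fun _ x => ?_).trans ?_
    · have hlog : M * ((T0 : ℝ) ^ cR) ^ 2 ≤ C₁ * Real.log ((K : ℝ) * T) := by
        calc M * ((T0 : ℝ) ^ cR) ^ 2 = M * ((T0 : ℝ) ^ cR) ^ 2 / Real.log 2 * Real.log 2 := by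
              field_simp
          _ ≤ C₁ * Real.log 2 := by gcongr; linarith
          _ ≤ _ := by gcongr
      refine le_trans ?_ hlog
      rcases le_or_gt (αbar t) 0 with hneg | hpos
      · exact (aux_trace' hneg hw0 k' x).trans (by positivity)
      · have hab : αbar t ≤ M := by
          have h1 := aux_abar_bound c₀ c₁ hc₀0.le hc₁0.le T hT αbar hTT hrec (T - t) (by omega)
          rw [show T - (T - t) = t by omega] at h1
          exact (le_abs_self _).trans (h1.trans (hMn _ (by omega)))
        refine (aux_trace hpos.le hw0 k' x 0).trans ?_
        have hk : ∀ i, ‖Real.sqrt (αbar t) • μ i - 0‖ ^ 2 ≤ M * ((T0 : ℝ) ^ cR) ^ 2 := by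
          intro i
          rw [sub_zero, norm_smul, mul_pow, Real.norm_of_nonneg (Real.sqrt_nonneg _),
            Real.sq_sqrt hpos.le]
          have h2 : ‖μ i‖ ≤ (T0 : ℝ) ^ cR :=
            (hμ i).trans (Real.rpow_le_rpow (by linarith) hT0' hcR.le)
          gcongr
        calc _ ≤ ∑ i, postWeight d K w μ (αbar t) i x * (M * ((T0 : ℝ) ^ cR) ^ 2) :=
              Finset.sum_le_sum fun i _ => mul_le_mul_of_nonneg_left (hk i) (aux_pw_pos hw0 i x).le
          _ = M * ((T0 : ℝ) ^ cR) ^ 2 := by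
              rw [← Finset.sum_mul, aux_pw_sum hw0 k' x, one_mul]
    · have h3 : (T : ℝ) ^ 3 ≤ (T0 : ℝ) ^ 3 := by gcongr
      calc (1 : ℝ) = (T : ℝ) ^ 3 * (1 / (T : ℝ) ^ 3) := by field_simp
        _ ≤ (4000000 + (T0 : ℝ) ^ 3) * (1 / (T : ℝ) ^ 3 +
            (1 - α t) ^ 2 * Real.log ((K : ℝ) * T) ^ 2) := by
          apply mul_le_mul (by linarith) (by linarith) (by positivity) (by positivity)
  · push Not at hTT0
    have hmem : T = 1 ∨ (0 < αbar t ∧ 0 < α t ∧ α t < 1) := by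
      rcases Nat.lt_or_ge T 2 with hlt | hge
      · left; omega
      · right
        have hT1' : (1 : ℝ) < T := by exact_mod_cast hge
        have hh0 : 0 < c₁ * (Real.log T / T) := by
          have := Real.log_pos hT1'
          positivity
        have hall := aux_abar_mem c₀ c₁ hc₀0 T hge _ hh0 (hT0 T hTT0.le) rfl αbar hTT hrec
        have hall' : ∀ s, 1 ≤ s → s ≤ T → 0 < αbar s ∧ αbar s < 1 := by
          intro s hs1 hs2
          have := hall (T - s) (by omega)
          rwa [show T - (T - s) = s by omega] at this
        have ht := hall' t ht1 htT
        refine ⟨ht.1, ?_⟩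
        rcases Nat.lt_or_ge t 2 with htl | htg
        · have : t = 1 := by omega
          subst this
          rw [hα1]; exact ht
        · rw [hα t htg htT]
          have ht' := hall' (t - 1) (by omega) (by omega)
          refine ⟨div_pos ht.1 ht'.1, ?_⟩
          rw [div_lt_one ht'.1, hrec t htg htT]
          have : 0 < c₁ * (Real.log T / T) * αbar t * (1 - αbar t) := by
            have h1 := ht.1
            have h2 : 0 < 1 - αbar t := by linarith [ht.2]
            positivity
          linarith
    rcases hmem with hTe | ⟨hab, ha0, ha1⟩
    · subst hTe
      have : t = 1 := by omega
      subst this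
      have hα1' : α 1 = 1 := by rw [hα1, hTT]; simp
      refine (aux_le_one hd 1 hw0 hws k' (α 1) C₁ 16000000 fun h => ?_).trans ?_
      · rw [hα1'] at h; exact absurd h (lt_irrefl _)
      · have : 0 ≤ (T0 : ℝ) ^ 3 := by positivity
        simp only [Nat.cast_one, one_pow, div_one, mul_one] at hsq ⊢
        nlinarith
    · by_cases haL : (1 - α t) * Real.log ((K : ℝ) * T) ≤ 1 / 2000
      · have h1 := aux_main (d := d) (μ := μ) T hK2 hT hw0 (fun k => (hw k).2) hws hab.le (α t) ha0 ha1
          C₁ 16000000 hC₁' le_rfl haL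
        refine (aux_double (α t) ha0 ha1 _ _ (by fun_prop)
          (fun u => Finset.sum_nonneg fun i _ => mul_nonneg (hw0 i).le (Real.exp_pos _).le) _
          (by positivity) h1).trans ?_
        have h4 : 0 ≤ (T0 : ℝ) ^ 3 := by positivity
        have h5 : 0 < 1 / (T : ℝ) ^ 3 := by positivity
        apply mul_le_mul (by linarith) (by linarith) (by positivity) (by positivity)
      · push Not at haL
        refine (aux_le_one hd T hw0 hws k' (α t) C₁ 16000000 fun h => absurd h (by linarith)).trans ?_
        have h4 : 0 ≤ (T0 : ℝ) ^ 3 := by positivity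
        have h5 : 0 < 1 / (T : ℝ) ^ 3 := by positivity
        have h6 : 1 / 4000000 ≤ (1 - α t) ^ 2 * Real.log ((K : ℝ) * T) ^ 2 := by
          rw [← mul_pow]
          nlinarith
        nlinarith
end

section
/- Let X_0 be a random vector in ℝ^d with E‖X_0‖₂² < ∞, let ᾱ ∈ (0, 1/2], and let X = √ᾱ X_0 + √(1−ᾱ) W with W ~ N(0, I_d) independent of X_0. Then KL( p_X ∥ N(0, I_d) ) ≤ (1/2) ( d(1−ᾱ) − d + ᾱ E‖X_0‖₂² − d log(1−ᾱ) ); in particular, KL( p_X ∥ N(0, I_d) ) ≤ C ᾱ ( E‖X_0‖₂² + d ) for some absolute constant C > 0. -/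
open MeasureTheory Real Finset
open scoped RealInnerProductSpace BigOperators

section helpers

lemma gauss_radial (d k : ℕ) (hd : 1 ≤ d) (b : ℝ) (hb : 0 < b) :
    Integrable (fun x : EuclideanSpace ℝ (Fin d) => ‖x‖ ^ k * rexp (-b * ‖x‖ ^ 2)) ∧
    ∫ x : EuclideanSpace ℝ (Fin d), ‖x‖ ^ k * rexp (-b * ‖x‖ ^ 2) =
      d * (volume.real (Metric.ball (0 : EuclideanSpace ℝ (Fin d)) 1) *
        (b ^ (-(((d + k : ℕ) : ℝ)) / 2) * (1 / 2) * Real.Gamma (((d + k : ℕ) : ℝ) / 2))) := by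
  have : Nonempty (Fin d) := ⟨⟨0, hd⟩⟩
  have hq : (-1 : ℝ) < ((d - 1 + k : ℕ) : ℝ) := by
    have : (0 : ℝ) ≤ ((d - 1 + k : ℕ) : ℝ) := Nat.cast_nonneg _
    linarith
  have hcast : ((d - 1 + k : ℕ) : ℝ) + 1 = ((d + k : ℕ) : ℝ) := by
    have : d + k = (d - 1 + k) + 1 := by omega
    rw [this]; push_cast; ring
  have heq : ∀ y : ℝ, y ^ (d - 1) • (y ^ k * rexp (-b * y ^ 2)) =
      y ^ ((d - 1 + k : ℕ) : ℝ) * rexp (-b * y ^ (2 : ℝ)) := by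
    intro y
    rw [Real.rpow_natCast, Real.rpow_two, smul_eq_mul, pow_add]; ring
  constructor
  · have := (integrable_fun_norm_addHaar (volume : Measure (EuclideanSpace ℝ (Fin d)))
      (f := fun y : ℝ => y ^ k * rexp (-b * y ^ 2))).2
    apply this
    simp only [finrank_euclideanSpace, Fintype.card_fin]
    simp_rw [heq]
    exact integrableOn_rpow_mul_exp_neg_mul_rpow hq two_pos hb
  · have := integral_fun_norm_addHaar (volume : Measure (EuclideanSpace ℝ (Fin d)))
      (fun y : ℝ => y ^ k * rexp (-b * y ^ 2))
    rw [this]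
    simp only [finrank_euclideanSpace, Fintype.card_fin]
    simp_rw [heq]
    rw [integral_rpow_mul_exp_neg_mul_rpow two_pos hq hb, hcast]
    simp [nsmul_eq_mul]

lemma gauss_second (d : ℕ) (hd : 1 ≤ d) (b : ℝ) (hb : 0 < b) :
    ∫ x : EuclideanSpace ℝ (Fin d), ‖x‖ ^ 2 * rexp (-b * ‖x‖ ^ 2) =
      d / (2 * b) * ∫ x : EuclideanSpace ℝ (Fin d), rexp (-b * ‖x‖ ^ 2) := by
  have h2 := (gauss_radial d 2 hd b hb).2
  have h0 := (gauss_radial d 0 hd b hb).2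
  simp only [pow_zero, one_mul] at h0
  rw [h2, h0]
  have hd' : (0 : ℝ) < d := by exact_mod_cast hd
  have e1 : ((d + 2 : ℕ) : ℝ) / 2 = (d : ℝ) / 2 + 1 := by push_cast; ring
  have e2 : -((d + 2 : ℕ) : ℝ) / 2 = -(d : ℝ) / 2 - 1 := by push_cast; ring
  rw [e1, e2, Real.Gamma_add_one (by positivity), Real.rpow_sub_one hb.ne']
  simp only [add_zero]
  field_simp

/-- Moments of the density `gaussV`. -/
lemma gaussV_moments (d : ℕ) (hd : 1 ≤ d) (v : ℝ) (hv : 0 < v)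
    (m : EuclideanSpace ℝ (Fin d)) :
    (Integrable (fun x => gaussV d v m x) ∧ ∫ x, gaussV d v m x = 1) ∧
    (Integrable (fun x => gaussV d v m x * ‖x - m‖ ^ 2) ∧
      ∫ x, gaussV d v m x * ‖x - m‖ ^ 2 = d * v) ∧
    (Integrable (fun x => gaussV d v m x * ‖x‖ ^ 2) ∧
      ∫ x, gaussV d v m x * ‖x‖ ^ 2 = d * v + ‖m‖ ^ 2) := by
  set b : ℝ := 1 / (2 * v) with hbdef
  have hb : 0 < b := by positivity
  set c : ℝ := (2 * Real.pi * v) ^ (-(d : ℝ) / 2) with hc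
  have hg : ∀ x, gaussV d v m x = c * rexp (-b * ‖x - m‖ ^ 2) := by
    intro x
    unfold gaussV
    rw [hbdef]
    congr 2
    ring
  have i0 := (gauss_radial d 0 hd b hb).1
  simp only [pow_zero, one_mul] at i0
  have i2 := (gauss_radial d 2 hd b hb).1
  have t0 := GaussianFourier.integral_rexp_neg_mul_sq_norm (V := EuclideanSpace ℝ (Fin d)) hb
  have t2 := gauss_second d hd b hb
  have hct : c * ∫ x : EuclideanSpace ℝ (Fin d), rexp (-b * ‖x‖ ^ 2) = 1 := by
    rw [t0, finrank_euclideanSpace, Fintype.card_fin, hc, hbdef]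
    have : π / (1 / (2 * v)) = 2 * π * v := by field_simp
    rw [this, ← Real.rpow_add (by positivity)]
    have : -(d : ℝ) / 2 + d / 2 = 0 := by ring
    rw [this, Real.rpow_zero]
  have hc2 : c * ∫ x : EuclideanSpace ℝ (Fin d), ‖x‖ ^ 2 * rexp (-b * ‖x‖ ^ 2) = d * v := by
    rw [t2, mul_left_comm, hct, hbdef]; field_simp
  -- the linear term
  have hi1 : Integrable (fun x : EuclideanSpace ℝ (Fin d) => ⟪x, m⟫ * rexp (-b * ‖x‖ ^ 2)) := by
    refine Integrable.mono' (i2.add (i0.const_mul (‖m‖ ^ 2))) ?_ ?_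
    · exact Continuous.aestronglyMeasurable (by fun_prop)
    · refine Filter.Eventually.of_forall fun x => ?_
      have h1 : |⟪x, m⟫| ≤ ‖x‖ * ‖m‖ := abs_real_inner_le_norm x m
      have h3 : |⟪x, m⟫| ≤ ‖x‖ ^ 2 + ‖m‖ ^ 2 := by
        nlinarith [sq_nonneg (‖x‖ - ‖m‖), sq_nonneg ‖x‖, sq_nonneg ‖m‖]
      have := mul_le_mul_of_nonneg_right h3 (Real.exp_pos (-b * ‖x‖ ^ 2)).le
      rw [Real.norm_eq_abs, abs_mul, abs_of_pos (Real.exp_pos _)]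
      simp only [Pi.add_apply]
      linarith
  have hz1 : ∫ x : EuclideanSpace ℝ (Fin d), ⟪x, m⟫ * rexp (-b * ‖x‖ ^ 2) = 0 := by
    have := integral_neg_eq_self
      (fun x : EuclideanSpace ℝ (Fin d) => ⟪x, m⟫ * rexp (-b * ‖x‖ ^ 2)) volume
    simp only [inner_neg_left, norm_neg, neg_mul (⟪_, m⟫), integral_neg] at this
    linarith
  have hexp : ∀ z : EuclideanSpace ℝ (Fin d), c * rexp (-b * ‖z‖ ^ 2) * ‖z + m‖ ^ 2 =
      c * (‖z‖ ^ 2 * rexp (-b * ‖z‖ ^ 2)) + 2 * c * (⟪z, m⟫ * rexp (-b * ‖z‖ ^ 2)) +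
        c * ‖m‖ ^ 2 * rexp (-b * ‖z‖ ^ 2) := by
    intro z
    rw [norm_add_sq_real]; ring
  have iD : Integrable (fun z : EuclideanSpace ℝ (Fin d) =>
      c * rexp (-b * ‖z‖ ^ 2) * ‖z + m‖ ^ 2) := by
    simp_rw [hexp]
    exact ((i2.const_mul c).add (hi1.const_mul (2 * c))).add (i0.const_mul (c * ‖m‖ ^ 2))
  have tD : ∫ z : EuclideanSpace ℝ (Fin d), c * rexp (-b * ‖z‖ ^ 2) * ‖z + m‖ ^ 2 =
      d * v + ‖m‖ ^ 2 := by
    simp_rw [hexp]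
    have ii : Integrable (fun z : EuclideanSpace ℝ (Fin d) =>
        c * (‖z‖ ^ 2 * rexp (-b * ‖z‖ ^ 2)) + 2 * c * (⟪z, m⟫ * rexp (-b * ‖z‖ ^ 2))) :=
      (i2.const_mul c).add (hi1.const_mul (2 * c))
    rw [integral_add ii (i0.const_mul (c * ‖m‖ ^ 2)), integral_add (i2.const_mul c) (hi1.const_mul (2 * c)),
      integral_const_mul, integral_const_mul, integral_const_mul, hz1, hc2]
    linear_combination (‖m‖ ^ 2) * hct
  simp_rw [hg]
  refine ⟨⟨?_, ?_⟩, ⟨?_, ?_⟩, ⟨?_, ?_⟩⟩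
  · exact (i0.const_mul c).comp_sub_right m
  · rw [integral_sub_right_eq_self (fun x => c * rexp (-b * ‖x‖ ^ 2)) m, integral_const_mul, hct]
  · have := (i2.const_mul c).comp_sub_right m
    refine this.congr (Filter.Eventually.of_forall fun x => ?_)
    simp only; ring
  · rw [← hc2, ← integral_const_mul,
      ← integral_sub_right_eq_self (fun x => c * (‖x‖ ^ 2 * rexp (-b * ‖x‖ ^ 2))) m]
    congr 1; ext x; ring
  · have := iD.comp_sub_right m
    simpa using this
  · have := integral_sub_right_eq_self
      (fun z : EuclideanSpace ℝ (Fin d) => c * rexp (-b * ‖z‖ ^ 2) * ‖z + m‖ ^ 2) (μ := volume) m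
    rw [tD] at this
    simpa using this

lemma integrable_prod_of_nonneg {d : ℕ} {μ₀ : Measure (EuclideanSpace ℝ (Fin d))}
    [IsProbabilityMeasure μ₀]
    (f : EuclideanSpace ℝ (Fin d) → EuclideanSpace ℝ (Fin d) → ℝ)
    (φ : EuclideanSpace ℝ (Fin d) → ℝ) (hf : Continuous (Function.uncurry f))
    (h0 : ∀ x y, 0 ≤ f x y) (hi : ∀ y, Integrable (fun x => f x y))
    (ht : ∀ y, ∫ x, f x y = φ y) (hφ : Integrable φ μ₀) :
    Integrable (Function.uncurry f) ((volume : Measure (EuclideanSpace ℝ (Fin d))).prod μ₀) := by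
  rw [integrable_prod_iff' hf.aestronglyMeasurable]
  refine ⟨Filter.Eventually.of_forall hi, ?_⟩
  have : (fun y => ∫ x, ‖Function.uncurry f (x, y)‖) = φ := by
    ext y
    rw [← ht y]
    congr 1; ext x
    simp [Function.uncurry, abs_of_nonneg (h0 x y)]
  rw [this]; exact hφ

lemma gaussV_pos (d : ℕ) (v : ℝ) (hv : 0 < v) (m x : EuclideanSpace ℝ (Fin d)) :
    0 < gaussV d v m x := by
  unfold gaussV; positivity

lemma log_gaussV_div (d : ℕ) (v : ℝ) (hv : 0 < v) (m x : EuclideanSpace ℝ (Fin d)) :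
    Real.log (gaussV d v m x / gaussV d 1 0 x) =
      -(d : ℝ) / 2 * Real.log v - ‖x - m‖ ^ 2 / (2 * v) + ‖x‖ ^ 2 / 2 := by
  rw [Real.log_div (gaussV_pos d v hv m x).ne' (gaussV_pos d 1 one_pos 0 x).ne']
  unfold gaussV
  rw [Real.log_mul (by positivity) (by positivity), Real.log_mul (by positivity) (by positivity),
    Real.log_exp, Real.log_exp, Real.log_rpow (by positivity), Real.log_rpow (by positivity),
    Real.log_mul (by positivity) hv.ne', mul_one, sub_zero]
  ring

/-- Pointwise Gibbs inequality. -/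
lemma gibbs_pt {g p q : ℝ} (hg : 0 < g) (hp : 0 < p) (hq : 0 < q) :
    g * Real.log (p / q) + (g - p) ≤ g * Real.log (g / q) := by
  have h := Real.log_le_sub_one_of_pos (div_pos hp hg)
  rw [Real.log_div hp.ne' hg.ne'] at h
  rw [Real.log_div hp.ne' hq.ne', Real.log_div hg.ne' hq.ne']
  have h2 := mul_le_mul_of_nonneg_left h hg.le
  have h3 : g * (p / g - 1) = p - g := by field_simp
  rw [h3] at h2
  nlinarith

lemma kl_main (d : ℕ) (μ₀ : Measure (EuclideanSpace ℝ (Fin d))) (abar : ℝ)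
    (hd : 1 ≤ d) [IsProbabilityMeasure μ₀] (hm : Integrable (fun x => ‖x‖ ^ 2) μ₀)
    (h0 : 0 < abar) (h1 : abar ≤ 1 / 2) :
    (∫ x, (∫ y, gaussV d (1 - abar) (Real.sqrt abar • y) x ∂μ₀) *
            Real.log ((∫ y, gaussV d (1 - abar) (Real.sqrt abar • y) x ∂μ₀) /
              gaussV d 1 0 x)) ≤
            (1 / 2) * (d * (1 - abar) - d + abar * (∫ y, ‖y‖ ^ 2 ∂μ₀) -
              d * Real.log (1 - abar)) := by
  set v := 1 - abar with hvdef
  have hv : 0 < v := by rw [hvdef]; linarith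
  set M := ∫ y, ‖y‖ ^ 2 ∂μ₀ with hM
  have hM0 : 0 ≤ M := integral_nonneg fun y => by positivity
  have hd0 : (0 : ℝ) ≤ d := Nat.cast_nonneg d
  by_cases hI : Integrable (fun x => (∫ y, gaussV d v (Real.sqrt abar • y) x ∂μ₀) *
            Real.log ((∫ y, gaussV d v (Real.sqrt abar • y) x ∂μ₀) / gaussV d 1 0 x))
  swap
  · rw [integral_undef hI]
    have := Real.log_le_sub_one_of_pos hv
    have h2 := mul_le_mul_of_nonneg_left this hd0
    nlinarith [mul_nonneg h0.le hM0]
  have hmom := fun y => gaussV_moments d hd v hv (Real.sqrt abar • y)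
  have hnorm : ∀ y : EuclideanSpace ℝ (Fin d), ‖Real.sqrt abar • y‖ ^ 2 = abar * ‖y‖ ^ 2 := by
    intro y
    rw [norm_smul, mul_pow, Real.norm_eq_abs, sq_abs, Real.sq_sqrt h0.le]
  have cg : Continuous (Function.uncurry fun x y : EuclideanSpace ℝ (Fin d) =>
      gaussV d v (Real.sqrt abar • y) x) := by
    unfold gaussV Function.uncurry
    fun_prop
  have hpos : ∀ x y : EuclideanSpace ℝ (Fin d), 0 < gaussV d v (Real.sqrt abar • y) x :=
    fun x y => gaussV_pos d v hv _ x
  have PA := integrable_prod_of_nonneg (μ₀ := μ₀)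
    (fun x y => gaussV d v (Real.sqrt abar • y) x) (fun _ => 1) cg
    (fun x y => (hpos x y).le) (fun y => (hmom y).1.1) (fun y => (hmom y).1.2)
    (integrable_const _)
  have PB := integrable_prod_of_nonneg (μ₀ := μ₀)
    (fun x y => gaussV d v (Real.sqrt abar • y) x * ‖x - Real.sqrt abar • y‖ ^ 2)
    (fun _ => d * v)
    (by unfold gaussV Function.uncurry; fun_prop)
    (fun x y => mul_nonneg (hpos x y).le (by positivity))
    (fun y => (hmom y).2.1.1) (fun y => (hmom y).2.1.2)
    (integrable_const _)
  have PD := integrable_prod_of_nonneg (μ₀ := μ₀)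
    (fun x y => gaussV d v (Real.sqrt abar • y) x * ‖x‖ ^ 2)
    (fun y => d * v + abar * ‖y‖ ^ 2)
    (by unfold gaussV Function.uncurry; fun_prop)
    (fun x y => mul_nonneg (hpos x y).le (by positivity))
    (fun y => (hmom y).2.2.1) (fun y => by rw [(hmom y).2.2.2, hnorm])
    ((integrable_const _).add (hm.const_mul _))
  have hh : ∀ x y : EuclideanSpace ℝ (Fin d), gaussV d v (Real.sqrt abar • y) x *
      Real.log (gaussV d v (Real.sqrt abar • y) x / gaussV d 1 0 x) =
      (-(d : ℝ) / 2 * Real.log v) * gaussV d v (Real.sqrt abar • y) x -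
      (1 / (2 * v)) * (gaussV d v (Real.sqrt abar • y) x * ‖x - Real.sqrt abar • y‖ ^ 2) +
      (1 / 2) * (gaussV d v (Real.sqrt abar • y) x * ‖x‖ ^ 2) := by
    intro x y
    rw [log_gaussV_div d v hv]; ring
  have PH : Integrable (Function.uncurry fun x y => gaussV d v (Real.sqrt abar • y) x *
      Real.log (gaussV d v (Real.sqrt abar • y) x / gaussV d 1 0 x))
      ((volume : Measure (EuclideanSpace ℝ (Fin d))).prod μ₀) := by
    have := ((PA.const_mul (-(d : ℝ) / 2 * Real.log v)).sub (PB.const_mul (1 / (2 * v)))).add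
      (PD.const_mul (1 / 2))
    refine this.congr (Filter.Eventually.of_forall fun p => ?_)
    exact (hh p.1 p.2).symm
  have inner_int : ∀ y, ∫ x, gaussV d v (Real.sqrt abar • y) x *
      Real.log (gaussV d v (Real.sqrt abar • y) x / gaussV d 1 0 x) =
      (-(d : ℝ) / 2 * Real.log v - d / 2 + d * v / 2) + abar / 2 * ‖y‖ ^ 2 := by
    intro y
    simp_rw [hh]
    obtain ⟨⟨a1, a2⟩, ⟨b1, b2⟩, ⟨c1, c2⟩⟩ := hmom y
    have ii : Integrable (fun x : EuclideanSpace ℝ (Fin d) =>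
        (-(d : ℝ) / 2 * Real.log v) * gaussV d v (Real.sqrt abar • y) x -
        (1 / (2 * v)) * (gaussV d v (Real.sqrt abar • y) x * ‖x - Real.sqrt abar • y‖ ^ 2)) :=
      (a1.const_mul _).sub (b1.const_mul _)
    rw [integral_add ii (c1.const_mul _),
      integral_sub (a1.const_mul _) (b1.const_mul _), integral_const_mul, integral_const_mul,
      integral_const_mul, a2, b2, c2, hnorm]
    field_simp
    ring
  have key : ∀ᵐ x : EuclideanSpace ℝ (Fin d), (∫ y, gaussV d v (Real.sqrt abar • y) x ∂μ₀) *
      Real.log ((∫ y, gaussV d v (Real.sqrt abar • y) x ∂μ₀) / gaussV d 1 0 x) ≤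
      ∫ y, gaussV d v (Real.sqrt abar • y) x *
        Real.log (gaussV d v (Real.sqrt abar • y) x / gaussV d 1 0 x) ∂μ₀ := by
    filter_upwards [PA.prod_right_ae, PH.prod_right_ae] with x hA hH
    simp only [Function.uncurry] at hA hH
    set p := ∫ y, gaussV d v (Real.sqrt abar • y) x ∂μ₀ with hp
    have hp0 : 0 < p := by
      rw [hp, integral_pos_iff_support_of_nonneg (fun y => (hpos x y).le) hA]
      have : Function.support (fun y => gaussV d v (Real.sqrt abar • y) x) = Set.univ := by
        ext y; simp [(hpos x y).ne']
      rw [this]; simp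
    have e : p * Real.log (p / gaussV d 1 0 x) = ∫ y, (gaussV d v (Real.sqrt abar • y) x *
        Real.log (p / gaussV d 1 0 x) + (gaussV d v (Real.sqrt abar • y) x - p)) ∂μ₀ := by
      have ii : Integrable (fun y => gaussV d v (Real.sqrt abar • y) x - p) μ₀ :=
        hA.sub (integrable_const _)
      rw [integral_add (hA.mul_const _) ii, integral_mul_const,
        integral_sub hA (integrable_const _), ← hp]
      simp
    rw [e]
    refine integral_mono ((hA.mul_const _).add (hA.sub (integrable_const _))) hH fun y => ?_
    exact gibbs_pt (hpos x y) hp0 (gaussV_pos d 1 one_pos 0 x)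
  calc _ ≤ ∫ x, ∫ y, gaussV d v (Real.sqrt abar • y) x *
        Real.log (gaussV d v (Real.sqrt abar • y) x / gaussV d 1 0 x) ∂μ₀ :=
        integral_mono_ae hI PH.integral_prod_left key
    _ = ∫ y, ∫ x, gaussV d v (Real.sqrt abar • y) x *
        Real.log (gaussV d v (Real.sqrt abar • y) x / gaussV d 1 0 x) ∂volume ∂μ₀ :=
        integral_integral_swap PH
    _ = (-(d : ℝ) / 2 * Real.log v - d / 2 + d * v / 2) + abar / 2 * M := by
        simp_rw [inner_int]
        rw [integral_add (integrable_const _) (hm.const_mul _), integral_const_mul]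
        simp [hM]
    _ = _ := by ring
    _ ≤ _ := le_refl _

end helpers

/-- Let `X₀` be a random vector in `ℝ^d` with `E‖X₀‖² < ∞`, let
`ᾱ ∈ (0, 1/2]`, and let `X = √ᾱ X₀ + √(1−ᾱ) W` with `W ~ N(0, I_d)` independent of `X₀`.
Then `KL(p_X ∥ N(0,I_d)) ≤ (1/2)(d(1−ᾱ) − d + ᾱ E‖X₀‖² − d log(1−ᾱ))`; in particular
`KL(p_X ∥ N(0,I_d)) ≤ C ᾱ (E‖X₀‖² + d)` for some absolute constant `C > 0`. -/
theorem stmt19 :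
    ∃ C : ℝ, 0 < C ∧
      ∀ (d : ℕ) (μ₀ : MeasureTheory.Measure (EuclideanSpace ℝ (Fin d))) (abar : ℝ),
        1 ≤ d → MeasureTheory.IsProbabilityMeasure μ₀ →
        MeasureTheory.Integrable (fun x => ‖x‖ ^ 2) μ₀ →
        abar ∈ Set.Ioc (0 : ℝ) (1 / 2) →
        (∫ x, (∫ y, gaussV d (1 - abar) (Real.sqrt abar • y) x ∂μ₀) *
            Real.log ((∫ y, gaussV d (1 - abar) (Real.sqrt abar • y) x ∂μ₀) /
              gaussV d 1 0 x)) ≤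
            (1 / 2) * (d * (1 - abar) - d + abar * (∫ y, ‖y‖ ^ 2 ∂μ₀) -
              d * Real.log (1 - abar)) ∧
          (∫ x, (∫ y, gaussV d (1 - abar) (Real.sqrt abar • y) x ∂μ₀) *
              Real.log ((∫ y, gaussV d (1 - abar) (Real.sqrt abar • y) x ∂μ₀) /
                gaussV d 1 0 x)) ≤
            C * abar * ((∫ y, ‖y‖ ^ 2 ∂μ₀) + d) := by
  refine ⟨1, one_pos, ?_⟩
  intro d μ₀ abar hd hP hm ha
  have hmain := kl_main d μ₀ abar hd hm ha.1 ha.2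
  refine ⟨hmain, hmain.trans ?_⟩
  obtain ⟨h0, h1⟩ := ha
  have hM0 : 0 ≤ ∫ y, ‖y‖ ^ 2 ∂μ₀ := integral_nonneg fun y => by positivity
  have hd0 : (0 : ℝ) ≤ d := Nat.cast_nonneg d
  have hv : 0 < 1 - abar := by linarith
  have hl : -(2 * abar) ≤ Real.log (1 - abar) := by
    have h2 := Real.one_sub_inv_le_log_of_pos hv
    have h3 : (1 - abar)⁻¹ ≤ 1 + 2 * abar := by
      rw [inv_le_iff_one_le_mul₀ hv]
      nlinarith
    linarith
  have h4 := mul_le_mul_of_nonneg_left hl hd0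
  nlinarith [mul_nonneg h0.le hM0, mul_nonneg h0.le hd0]
end
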